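/- arXiv:1702.01470 — 6 statements merged into one kernel-verified Lean document; each statement's English description precedes it below -/
import Mathlib

section
/- Fix k ≥ 1 and (m_1, ..., m_k) ∈ ℤ^k with not all m_j equal to zero. Then: (i) for all integers N > N' ≥ 0, the number of pairs (n_1, n_2) with N' < n_1, n_2 ≤ N satisfying ∏_{j=1}^k (n_1+j)^{m_j} = ∏_{j=1}^k (n_2+j)^{m_j} (as an equality of positive rationals) is at least N - N' and at most k(N - N'); (ii) the total number of pairs (n_1, n_2) of positive integers with n_1 ≠ n_2 satisfying this equation is finite. -/
/-!
Taking logarithms, the equation says that `g(x) = ∑ m_j log (x + 1 + j)` takes the same value at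
`n₁` and `n₂`. On `x ≥ 0` the derivative of `g` is `P(x) / ∏ (x + 1 + j)`, where
`P = ∑_j m_j ∏_{i ≠ j} (X + 1 + i)` has degree less than `k`. Moreover `P` is nonzero, because its
value at `-(1 + j)` is `m_j ∏_{i ≠ j} (i - j)`. By Rolle, two distinct integers in the same fibre
are separated by a root of `P` (`exists_root_between`).

Hence every fibre has at most `(k - 1) + 1 = k` elements (`card_fibre_le`), which gives (i), the
lower bound there coming from the diagonal. If `B` bounds the roots of `P`, then a solution with
`n₁ ≠ n₂` has `min n₁ n₂ < B`, and the other coordinate lies in one of finitely many finite fibres;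
this gives (ii).
-/

open Polynomial

/-- The rational function `∏ (x + 1 + j) ^ m_j` at a natural number. -/
def ratProd (k : ℕ) (m : Fin k → ℤ) (n : ℕ) : ℚ :=
  ∏ j : Fin k, ((n + 1 + (j : ℕ) : ℕ) : ℚ) ^ (m j)

/-- The numerator `∑_j m_j ∏_{i ≠ j} (X + 1 + i)` of the logarithmic derivative of
`∏ (x + 1 + j) ^ m_j`. -/
noncomputable def logDerivNum (k : ℕ) (m : Fin k → ℤ) : ℝ[X] :=
  ∑ j : Fin k, C (m j : ℝ) * ∏ i ∈ Finset.univ.erase j, (X + C (1 + (i : ℕ) : ℝ))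

/-- The logarithm `∑_j m_j log (x + 1 + j)` of `∏ (x + 1 + j) ^ m_j`. -/
noncomputable def logProd (k : ℕ) (m : Fin k → ℤ) (x : ℝ) : ℝ :=
  ∑ j : Fin k, (m j : ℝ) * Real.log (x + (1 + (j : ℕ)))

lemma logDerivNum_ne_zero (k : ℕ) (m : Fin k → ℤ) (hm : m ≠ 0) : logDerivNum k m ≠ 0 := by
  obtain ⟨j, hj⟩ := Function.ne_iff.mp hm
  intro h
  have h1 : (logDerivNum k m).eval (-(1 + (j : ℕ) : ℝ)) = 0 := by rw [h, eval_zero]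
  rw [logDerivNum, eval_finsetSum, Finset.sum_eq_single j] at h1
  · simp only [eval_mul, eval_C, eval_prod, eval_add, eval_X, mul_eq_zero, Int.cast_eq_zero,
      Finset.prod_eq_zero_iff, Finset.mem_erase, Finset.mem_univ, and_true] at h1
    rcases h1 with h1 | ⟨i, hi, h1⟩
    · exact hj h1
    · apply hi
      have h2 : ((i : ℕ) : ℝ) = (j : ℕ) := by linarith
      exact Fin.ext (by exact_mod_cast h2)
  · intro i _ hij
    simp only [eval_mul, eval_C, eval_prod, eval_add, eval_X]
    rw [Finset.prod_eq_zero (i := j) (Finset.mem_erase.mpr ⟨hij.symm, Finset.mem_univ _⟩) (by ring),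
      mul_zero]
  · simp

lemma natDegree_logDerivNum_le (k : ℕ) (m : Fin k → ℤ) :
    (logDerivNum k m).natDegree ≤ k - 1 := by
  apply natDegree_sum_le_of_forall_le
  intro j _
  refine (natDegree_C_mul_le _ _).trans ((natDegree_prod_le _ _).trans ?_)
  refine (Finset.sum_le_card_nsmul _ _ 1 fun i _ => (natDegree_X_add_C _).le).trans ?_
  simp

lemma logProd_natCast (k : ℕ) (m : Fin k → ℤ) (n : ℕ) :
    logProd k m n = Real.log (ratProd k m n : ℚ) := by
  rw [ratProd, Rat.cast_prod, Real.log_prod]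
  · refine Finset.sum_congr rfl fun j _ => ?_
    rw [Rat.cast_zpow, Real.log_zpow]
    push_cast
    rw [add_assoc]
  · intro j _
    rw [Rat.cast_zpow]
    apply zpow_ne_zero
    push_cast
    positivity

lemma hasDerivAt_logProd (k : ℕ) (m : Fin k → ℤ) (x : ℝ) (hx : 0 ≤ x) :
    HasDerivAt (logProd k m)
      ((logDerivNum k m).eval x / ∏ j : Fin k, (x + (1 + (j : ℕ)))) x := by
  have hpos : ∀ j : Fin k, x + (1 + ((j : ℕ) : ℝ)) ≠ 0 := fun j => by positivity
  have h : HasDerivAt (logProd k m)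
      (∑ j : Fin k, (m j : ℝ) * (1 / (x + (1 + (j : ℕ))))) x := by
    unfold logProd
    exact HasDerivAt.fun_sum fun j _ =>
      (((hasDerivAt_id x).add_const _).log (hpos j)).const_mul _
  convert h using 1
  rw [logDerivNum, eval_finsetSum, Finset.sum_div]
  refine Finset.sum_congr rfl fun j _ => ?_
  simp only [eval_mul, eval_C, eval_prod, eval_add, eval_X]
  rw [← Finset.mul_prod_erase Finset.univ _ (Finset.mem_univ j)]
  have h2 : ∏ i ∈ Finset.univ.erase j, (x + (1 + ((i : ℕ) : ℝ))) ≠ 0 :=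
    Finset.prod_ne_zero_iff.mpr fun i _ => hpos i
  have h1 := hpos j
  field_simp

/-- Rolle's theorem for the logarithm of the product. -/
lemma exists_root_between (k : ℕ) (m : Fin k → ℤ) (hm : m ≠ 0) (a b : ℕ) (hab : a < b)
    (h : ratProd k m a = ratProd k m b) :
    ∃ z ∈ (logDerivNum k m).roots.toFinset, (a : ℝ) < z ∧ z < b := by
  have ha : (0 : ℝ) ≤ a := a.cast_nonneg
  obtain ⟨z, hz, hz0⟩ := exists_hasDerivAt_eq_zero (f := logProd k m)
    (f' := fun x => (logDerivNum k m).eval x / ∏ j : Fin k, (x + (1 + (j : ℕ))))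
    (show (a : ℝ) < b by exact_mod_cast hab)
    (fun x hx => (hasDerivAt_logProd k m x (ha.trans hx.1)).continuousAt.continuousWithinAt)
    (by rw [logProd_natCast, logProd_natCast, h])
    (fun x hx => hasDerivAt_logProd k m x (ha.trans hx.1.le))
  have hz' : 0 ≤ z := ha.trans hz.1.le
  refine ⟨z, ?_, hz.1, hz.2⟩
  rw [Multiset.mem_toFinset, mem_roots (logDerivNum_ne_zero k m hm), IsRoot.def]
  refine (div_eq_zero_iff.mp hz0).resolve_right (Finset.prod_ne_zero_iff.mpr fun i _ => ?_)
  positivity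

lemma card_fibre_le (k : ℕ) (hk : 1 ≤ k) (m : Fin k → ℤ) (hm : m ≠ 0) (s : Finset ℕ) (c : ℚ)
    (hs : ∀ n ∈ s, ratProd k m n = c) : s.card ≤ k := by
  have h1 : (s.map ⟨((↑) : ℕ → ℝ), Nat.cast_injective⟩).card
      ≤ (logDerivNum k m).roots.toFinset.card + 1 := by
    apply Finset.card_le_of_interleaved
    intro x hx y hy hxy _
    obtain ⟨a, ha, rfl⟩ := Finset.mem_map.mp hx
    obtain ⟨b, hb, rfl⟩ := Finset.mem_map.mp hy
    exact exists_root_between k m hm a b (Nat.cast_lt.mp hxy) ((hs a ha).trans (hs b hb).symm)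
  rw [Finset.card_map] at h1
  have h2 := Multiset.toFinset_card_le (logDerivNum k m).roots
  have h3 := card_roots' (logDerivNum k m)
  have h4 := natDegree_logDerivNum_le k m
  omega

lemma finite_fibre (k : ℕ) (hk : 1 ≤ k) (m : Fin k → ℤ) (hm : m ≠ 0) (c : ℚ) :
    {n : ℕ | ratProd k m n = c}.Finite := by
  by_contra h
  obtain ⟨t, ht, hc⟩ := Set.Infinite.exists_subset_card_eq h (k + 1)
  have := card_fibre_le k hk m hm t c fun n hn => ht hn
  omega

/-- If `B` exceeds every root of `logDerivNum`, each off-diagonal solution has the form `(a, b)` or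
`(b, a)` with `a < B` and `b` in the (finite) fibre of `a`. -/
lemma finite_offDiag (k : ℕ) (hk : 1 ≤ k) (m : Fin k → ℤ) (hm : m ≠ 0) :
    {p : ℕ × ℕ | p.1 ≠ p.2 ∧ ratProd k m p.1 = ratProd k m p.2}.Finite := by
  obtain ⟨M, hM⟩ := (logDerivNum k m).roots.toFinset.bddAbove
  obtain ⟨B, hB⟩ := exists_nat_gt M
  have hlt : ∀ a b : ℕ, a < b → ratProd k m a = ratProd k m b → a < B := by
    intro a b hab h
    obtain ⟨z, hz, haz, _⟩ := exists_root_between k m hm a b hab h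
    have hzM : z ≤ M := hM hz
    exact_mod_cast haz.trans (hzM.trans_lt hB)
  have hfin : (⋃ a ∈ Set.Iio B, ({a} ×ˢ {n | ratProd k m n = ratProd k m a} ∪
      {n | ratProd k m n = ratProd k m a} ×ˢ {a} : Set (ℕ × ℕ))).Finite :=
    (Set.finite_Iio B).biUnion fun a _ =>
      ((Set.finite_singleton a).prod (finite_fibre k hk m hm _)).union
        ((finite_fibre k hk m hm _).prod (Set.finite_singleton a))
  refine hfin.subset ?_
  rintro ⟨a, b⟩ ⟨hne, h⟩
  simp only [Set.mem_iUnion]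
  rcases lt_or_gt_of_ne hne with hab | hab
  · exact ⟨a, hlt a b hab h, Or.inl ⟨rfl, h.symm⟩⟩
  · exact ⟨b, hlt b a hab h.symm, Or.inr ⟨h, rfl⟩⟩

/-- Counting solutions of `∏_{j=1}^k (n₁+j)^(m_j) = ∏_{j=1}^k (n₂+j)^(m_j)` (equality of
positive rationals) for `(m₁, ..., m_k) ≠ 0`: (i) for `N > N' ≥ 0`, the number of pairs
`(n₁, n₂)` with `N' < n₁, n₂ ≤ N` solving the equation is between `N - N'` and
`k (N - N')`; (ii) the total number of solutions with `n₁ ≠ n₂` positive is finite. -/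
theorem statement6 (k : ℕ) (hk : 1 ≤ k) (m : Fin k → ℤ) (hm : m ≠ 0) :
    (∀ N' N : ℕ, N' < N →
        N - N' ≤ ((Finset.Ioc N' N ×ˢ Finset.Ioc N' N).filter
            (fun p : ℕ × ℕ =>
              ∏ j : Fin k, ((p.1 + 1 + (j : ℕ) : ℕ) : ℚ) ^ (m j) =
                ∏ j : Fin k, ((p.2 + 1 + (j : ℕ) : ℕ) : ℚ) ^ (m j))).card ∧
          ((Finset.Ioc N' N ×ˢ Finset.Ioc N' N).filter
            (fun p : ℕ × ℕ =>
              ∏ j : Fin k, ((p.1 + 1 + (j : ℕ) : ℕ) : ℚ) ^ (m j) =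
                ∏ j : Fin k, ((p.2 + 1 + (j : ℕ) : ℕ) : ℚ) ^ (m j))).card ≤
            k * (N - N')) ∧
      {p : ℕ × ℕ | 0 < p.1 ∧ 0 < p.2 ∧ p.1 ≠ p.2 ∧
          ∏ j : Fin k, ((p.1 + 1 + (j : ℕ) : ℕ) : ℚ) ^ (m j) =
            ∏ j : Fin k, ((p.2 + 1 + (j : ℕ) : ℕ) : ℚ) ^ (m j)}.Finite := by
  refine ⟨fun N' N hN => ⟨?_, ?_⟩, ?_⟩
  · rw [← Nat.card_Ioc N' N]
    refine Finset.card_le_card_of_injOn (fun n => (n, n)) (fun n hn => ?_)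
      (fun a _ b _ hab => (Prod.mk.inj hab).1)
    simpa using hn
  · rw [← Nat.card_Ioc N' N]
    refine Finset.card_le_mul_card_image_of_maps_to (f := Prod.snd)
      (fun p hp => (Finset.mem_product.mp (Finset.mem_filter.mp hp).1).2) k (fun b _ => ?_)
    -- The solutions with second coordinate `b` inject into the fibre of `b` by the first one.
    rw [← Finset.card_image_of_injOn (f := Prod.fst)]
    · refine card_fibre_le k hk m hm _ (ratProd k m b) fun n hn => ?_
      obtain ⟨p, hp, rfl⟩ := Finset.mem_image.mp hn
      obtain ⟨hsol, rfl⟩ := Finset.mem_filter.mp hp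
      exact (Finset.mem_filter.mp hsol).2
    · intro p hp q hq hpq
      exact Prod.ext hpq ((Finset.mem_filter.mp hp).2.trans (Finset.mem_filter.mp hq).2.symm)
  · exact (finite_offDiag k hk m hm).subset fun p hp => ⟨hp.2.2.1, hp.2.2.2⟩
end

section
/- The only integers n_1 > n_2 ≥ 1 and (m_1, m_2, m_3) ∈ ℤ³ \ {(0,0,0)} satisfying (n_1+1)^{m_1} (n_1+2)^{m_2} (n_1+3)^{m_3} = (n_2+1)^{m_1} (n_2+2)^{m_2} (n_2+3)^{m_3} (as an equality of positive rationals) are n_1 = 7, n_2 = 2 with (m_1, m_2, m_3) a rational multiple of (2, 1, -4); this corresponds to the identity 8² · 9 · 10^{-4} = 3² · 4 · 5^{-4}. -/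
/-!
Put `a = n₁ + 1` and `b = n₂ + 1`, so `a > b ≥ 2`. The three ratios `(a + i) / (b + i)` exceed `1`,
so the exponents have both signs; up to a global sign change, exactly one exponent is negative
(the "isolated" one) and the other two are nonnegative. Clearing denominators gives an identity
between natural numbers.

An odd prime divides at most one of three consecutive integers. Comparing the odd parts of both
sides by coprimality, the isolated terms on the two sides have the same odd part
(`isolated_odd_part`), hence `a + i = 2 ^ s * (b + i)` with `s ≥ 1` for the isolated index `i`. What
remains is an identity between the other odd parts, and a linear identity between the 2-adic
valuations.

* `i = 1`: here `a` and `a + 2` are odd, and the signs in the valuation identity are incompatible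
  (`middle_isolated`).
* `i = 0` or `i = 2`, `s ≥ 2`: the other even term among `a, a + 2` is `2` modulo `4`, and the odd
  parts on the side of `a` are too large.
* `i = 0` or `i = 2`, `s = 1`: `a` is `2 * b` or `2 * b + 2`; the identity between odd parts forces
  `b + 1` to be a power of two, and then `b + 2 ∣ 2 * b + 1`, which is impossible, or
  `b ∣ 2 * b + 3`, which gives `b = 3` and `a = 8` (`first_isolated`, `last_isolated`).
-/

/-- In an identity between products of powers where the third terms `2 ^ e₂ * A₂`, `2 ^ f₂ * B₂`
occur crosswise and their odd parts are coprime to the odd parts of the other terms on the same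
side, these odd parts agree; the identity then splits into an odd part and a 2-adic part. -/
lemma isolated_odd_part {e₀ e₁ e₂ f₀ f₁ f₂ A₀ A₁ A₂ B₀ B₁ B₂ p q r : ℕ}
    (hA₀ : Odd A₀) (hA₁ : Odd A₁) (hA₂ : Odd A₂) (hB₀ : Odd B₀) (hB₁ : Odd B₁) (hB₂ : Odd B₂)
    (cA₀ : Nat.Coprime A₂ A₀) (cA₁ : Nat.Coprime A₂ A₁)
    (cB₀ : Nat.Coprime B₂ B₀) (cB₁ : Nat.Coprime B₂ B₁) (hr : 0 < r)
    (h : (2 ^ e₀ * A₀) ^ p * (2 ^ e₁ * A₁) ^ q * (2 ^ f₂ * B₂) ^ r =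
      (2 ^ f₀ * B₀) ^ p * (2 ^ f₁ * B₁) ^ q * (2 ^ e₂ * A₂) ^ r) :
    A₂ = B₂ ∧ A₀ ^ p * A₁ ^ q = B₀ ^ p * B₁ ^ q ∧
      p * e₀ + q * e₁ + r * f₂ = p * f₀ + q * f₁ + r * e₂ := by
  have key : ∀ {k l M N : ℕ}, Odd M → Odd N → 2 ^ k * M = 2 ^ l * N → k ≤ l := by
    intro k l M N hM hN hkl
    have hdvd : 2 ^ k ∣ 2 ^ l * N := ⟨M, hkl.symm⟩
    have hcop : Nat.Coprime (2 ^ k) N := (Nat.coprime_two_left.mpr hN).pow_left k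
    exact (Nat.pow_dvd_pow_iff_le_right (by norm_num)).mp (hcop.dvd_of_dvd_mul_right hdvd)
  have hM : Odd (A₀ ^ p * A₁ ^ q * B₂ ^ r) := (hA₀.pow.mul hA₁.pow).mul hB₂.pow
  have hN : Odd (B₀ ^ p * B₁ ^ q * A₂ ^ r) := (hB₀.pow.mul hB₁.pow).mul hA₂.pow
  have h' : 2 ^ (p * e₀ + q * e₁ + r * f₂) * (A₀ ^ p * A₁ ^ q * B₂ ^ r) =
      2 ^ (p * f₀ + q * f₁ + r * e₂) * (B₀ ^ p * B₁ ^ q * A₂ ^ r) := by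
    calc _ = (2 ^ e₀ * A₀) ^ p * (2 ^ e₁ * A₁) ^ q * (2 ^ f₂ * B₂) ^ r := by ring
      _ = _ := h
      _ = _ := by ring
  have hE := le_antisymm (key hM hN h') (key hN hM h'.symm)
  have hO : A₀ ^ p * A₁ ^ q * B₂ ^ r = B₀ ^ p * B₁ ^ q * A₂ ^ r := by
    rw [hE] at h'
    exact Nat.eq_of_mul_eq_mul_left (by positivity) h'
  have d₁ : A₂ ^ r ∣ B₂ ^ r := by
    have hc : Nat.Coprime (A₂ ^ r) (A₀ ^ p * A₁ ^ q) :=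
      Nat.Coprime.mul_right (cA₀.pow r p) (cA₁.pow r q)
    exact hc.dvd_of_dvd_mul_left (hO ▸ Dvd.intro_left _ rfl)
  have d₂ : B₂ ^ r ∣ A₂ ^ r := by
    have hc : Nat.Coprime (B₂ ^ r) (B₀ ^ p * B₁ ^ q) :=
      Nat.Coprime.mul_right (cB₀.pow r p) (cB₁.pow r q)
    exact hc.dvd_of_dvd_mul_left (hO ▸ Dvd.intro_left _ rfl)
  have hAB : A₂ = B₂ := Nat.pow_left_injective hr.ne' (Nat.dvd_antisymm d₁ d₂)
  refine ⟨hAB, ?_, hE⟩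
  subst hAB
  exact Nat.eq_of_mul_eq_mul_right (pow_pos hA₂.pos r) hO

/-- The odd parts of three consecutive integers are pairwise coprime. -/
lemma odd_parts (a : ℕ) (ha : 0 < a) : ∃ e₀ e₁ e₂ A₀ A₁ A₂ : ℕ, Odd A₀ ∧ Odd A₁ ∧ Odd A₂ ∧
    a = 2 ^ e₀ * A₀ ∧ a + 1 = 2 ^ e₁ * A₁ ∧ a + 2 = 2 ^ e₂ * A₂ ∧
    Nat.Coprime A₀ A₁ ∧ Nat.Coprime A₁ A₂ ∧ Nat.Coprime A₀ A₂ := by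
  obtain ⟨e₀, A₀, h₀, e0⟩ := Nat.exists_eq_two_pow_mul_odd (n := a) (by omega)
  obtain ⟨e₁, A₁, h₁, e1⟩ := Nat.exists_eq_two_pow_mul_odd (n := a + 1) (by omega)
  obtain ⟨e₂, A₂, h₂, e2⟩ := Nat.exists_eq_two_pow_mul_odd (n := a + 2) (by omega)
  have d₀ : A₀ ∣ a := ⟨2 ^ e₀, by rw [mul_comm]; exact e0⟩
  have d₁ : A₁ ∣ a + 1 := ⟨2 ^ e₁, by rw [mul_comm]; exact e1⟩
  have d₂ : A₂ ∣ a + 2 := ⟨2 ^ e₂, by rw [mul_comm]; exact e2⟩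
  refine ⟨e₀, e₁, e₂, A₀, A₁, A₂, h₀, h₁, h₂, e0, e1, e2, ?_, ?_, ?_⟩
  · exact Nat.Coprime.of_dvd d₀ d₁ (by simp)
  · exact Nat.Coprime.of_dvd d₁ d₂ (Nat.coprime_self_add_right.mpr (Nat.coprime_one_right _) :
      Nat.Coprime (a + 1) (a + 1 + 1))
  · have g₁ : Nat.gcd A₀ A₂ ∣ 2 :=
      (Nat.dvd_add_right ((Nat.gcd_dvd_left _ _).trans d₀)).mp ((Nat.gcd_dvd_right _ _).trans d₂)
    have g₂ : Nat.Coprime (Nat.gcd A₀ A₂) 2 :=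
      Nat.Coprime.of_dvd_left (Nat.gcd_dvd_left _ _) (Nat.coprime_two_right.mpr h₀)
    exact Nat.Coprime.eq_one_of_dvd g₂ g₁

lemma eq_two_pow_mul {x y e f A : ℕ} (hx : x = 2 ^ e * A) (hy : y = 2 ^ f * A) (h : y < x) :
    f < e ∧ x = 2 ^ (e - f) * y := by
  have hfe : f < e := by
    by_contra hle
    have := Nat.pow_le_pow_right (n := 2) (by norm_num) (not_lt.mp hle)
    have := Nat.mul_le_mul_right A this
    omega
  refine ⟨hfe, ?_⟩
  rw [hx, hy, ← mul_assoc, ← pow_add, Nat.sub_add_cancel hfe.le]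

lemma even_iff_exponent_pos {x e A : ℕ} (hA : Odd A) (hx : x = 2 ^ e * A) :
    x % 2 = 0 ↔ 0 < e := by
  obtain ⟨k, rfl⟩ := hA
  rcases Nat.eq_zero_or_pos e with rfl | he
  · simp at hx; omega
  · obtain ⟨e, rfl⟩ := Nat.exists_eq_succ_of_ne_zero he.ne'
    simp only [he, iff_true, hx, pow_succ]
    rw [mul_right_comm]; simp

/-- A number congruent to `2` modulo `4` has 2-adic valuation `1`. -/
lemma exponent_eq_one {x e A : ℕ} (hA : Odd A) (hx : x = 2 ^ e * A) (h : x % 4 = 2) :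
    e = 1 := by
  have h1 := (even_iff_exponent_pos hA hx).mp (by omega)
  by_contra hne
  obtain ⟨k, rfl⟩ : ∃ k, e = k + 2 := ⟨e - 2, by omega⟩
  have : 4 ∣ x := ⟨2 ^ k * A, by rw [hx]; ring⟩
  omega

lemma odd_part_le {x e A : ℕ} (hx : x = 2 ^ e * A) : A ≤ x := by
  rw [hx]; exact Nat.le_mul_of_pos_left _ (by positivity)

lemma odd_part_unique {x e f A B : ℕ} (hA : Odd A) (hB : Odd B) (hx : x = 2 ^ e * A)
    (hy : x = 2 ^ f * B) : e = f ∧ A = B := by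
  have h := isolated_odd_part (e₀ := 0) (e₁ := 0) (f₀ := 0) (f₁ := 0) (p := 0) (q := 0) (r := 1)
    (A₀ := 1) (A₁ := 1) (B₀ := 1) (B₁ := 1) (e₂ := e) (f₂ := f) (A₂ := A) (B₂ := B)
    odd_one odd_one hA odd_one odd_one hB (by simp) (by simp) (by simp) (by simp) one_pos
    (by simp [← hx, ← hy])
  have h2 := h.2.2
  exact ⟨by omega, h.1⟩

lemma pow_mul_pow_lt {x y x' y' p q : ℕ} (hx : x' < x) (hy : y' ≤ y) (hy0 : 0 < y) (hp : 0 < p) :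
    x' ^ p * y' ^ q < x ^ p * y ^ q :=
  mul_lt_mul_of_lt_of_le_of_nonneg_of_pos (Nat.pow_lt_pow_left hx hp.ne')
    (Nat.pow_le_pow_left hy q) (Nat.zero_le _) (by positivity)

lemma middle_isolated {a b p q r : ℕ} (hb : 2 ≤ b) (hab : b < a) (hr : 0 < r)
    (h : a ^ p * (a + 2) ^ q * (b + 1) ^ r = b ^ p * (b + 2) ^ q * (a + 1) ^ r) : False := by
  obtain ⟨e₀, e₁, e₂, A₀, A₁, A₂, hA₀, hA₁, hA₂, ha₀, ha₁, ha₂, cA₀₁, cA₁₂, cA₀₂⟩ :=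
    odd_parts a (by omega)
  obtain ⟨f₀, f₁, f₂, B₀, B₁, B₂, hB₀, hB₁, hB₂, hb₀, hb₁, hb₂, cB₀₁, cB₁₂, cB₀₂⟩ :=
    odd_parts b (by omega)
  rw [ha₁, ha₂, hb₁, hb₂, ha₀, hb₀] at h
  obtain ⟨rfl, -, hval⟩ := isolated_odd_part hA₀ hA₂ hA₁ hB₀ hB₂ hB₁ cA₀₁.symm cA₁₂
    cB₀₁.symm cB₁₂ hr h
  obtain ⟨hlt, -⟩ := eq_two_pow_mul ha₁ hb₁ (by omega)
  have he₁ := (even_iff_exponent_pos hA₁ ha₁).mpr (by omega)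
  have he₀ := even_iff_exponent_pos hA₀ ha₀
  have he₂ := even_iff_exponent_pos hA₂ ha₂
  obtain rfl : e₀ = 0 := by omega
  obtain rfl : e₂ = 0 := by omega
  have := Nat.mul_lt_mul_of_pos_left hlt hr
  simp only [mul_zero, zero_add] at hval
  omega

lemma first_isolated {a b p q r : ℕ} (hb : 2 ≤ b) (hab : b < a) (hr : 0 < r)
    (h : (a + 2) ^ p * (a + 1) ^ q * b ^ r = (b + 2) ^ p * (b + 1) ^ q * a ^ r) : False := by
  obtain ⟨e₀, e₁, e₂, A₀, A₁, A₂, hA₀, hA₁, hA₂, ha₀, ha₁, ha₂, cA₀₁, cA₁₂, cA₀₂⟩ :=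
    odd_parts a (by omega)
  obtain ⟨f₀, f₁, f₂, B₀, B₁, B₂, hB₀, hB₁, hB₂, hb₀, hb₁, hb₂, cB₀₁, cB₁₂, cB₀₂⟩ :=
    odd_parts b (by omega)
  rw [ha₁, ha₂, hb₁, hb₂, ha₀, hb₀] at h
  obtain ⟨rfl, hodd, hval⟩ := isolated_odd_part hA₂ hA₁ hA₀ hB₂ hB₁ hB₀ cA₀₂ cA₀₁
    cB₀₂ cB₀₁ hr h
  obtain ⟨hlt, hs⟩ := eq_two_pow_mul ha₀ hb₀ hab
  have he₀ := (even_iff_exponent_pos hA₀ ha₀).mpr (by omega)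
  have he₁ := even_iff_exponent_pos hA₁ ha₁
  obtain rfl : e₁ = 0 := by omega
  simp only [pow_zero, one_mul] at ha₁
  subst ha₁
  have hrlt := Nat.mul_lt_mul_of_pos_left hlt hr
  -- The power of two gained by the isolated term has to be compensated by `a + 2` against `b + 2`.
  have hpe : p * f₂ + q * f₁ < p * e₂ := by
    simp only [mul_zero, add_zero] at hval
    omega
  have hp : 0 < p := by
    rcases Nat.eq_zero_or_pos p with rfl | hp
    · simp at hpe
    · exact hp
  have hf₂e₂ : f₂ < e₂ := Nat.lt_of_mul_lt_mul_left (a := p) (by omega)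
  have hB₁le := odd_part_le hb₁
  rcases Nat.lt_or_ge 1 (e₀ - f₀) with hs2 | hs1
  · obtain ⟨k, hk⟩ : ∃ k, e₀ - f₀ = k + 2 := ⟨e₀ - f₀ - 2, by omega⟩
    have ha4 : a = 4 * (2 ^ k * b) := by rw [hs, hk]; ring
    have hkb : b ≤ 2 ^ k * b := Nat.le_mul_of_pos_left _ (by positivity)
    obtain rfl : e₂ = 1 := exponent_eq_one hA₂ ha₂ (by omega)
    obtain rfl : f₂ = 0 := by omega
    simp only [pow_zero, pow_one, one_mul] at ha₂ hb₂
    have := pow_mul_pow_lt (x := A₂) (x' := B₂) (y := a + 1) (y' := B₁) (q := q)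
      (by omega) (by omega) (by omega) hp
    omega
  · have hs1' : e₀ - f₀ = 1 := by omega
    have ha2 : a = 2 * b := by rw [hs, hs1', pow_one]
    obtain ⟨rfl, rfl⟩ : e₂ = f₁ + 1 ∧ A₂ = B₁ := odd_part_unique hA₂ hB₁ ha₂
      (by rw [pow_succ, mul_right_comm, ← hb₁, ha2]; ring)
    have hf₁ := even_iff_exponent_pos hB₁ hb₁
    have hf₂ := even_iff_exponent_pos hB₂ hb₂
    obtain rfl : f₂ = 0 := by omega
    simp only [pow_zero, one_mul] at hb₂
    subst hb₂
    rw [ha2] at hodd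
    rcases Nat.lt_or_ge q p with hqp | hpq
    · obtain ⟨d, rfl⟩ := Nat.exists_eq_add_of_lt hqp
      have h1 : A₂ ^ (d + 1) * (2 * b + 1) ^ q = (b + 2) ^ (q + d + 1) := by
        apply Nat.eq_of_mul_eq_mul_right (pow_pos hB₁.pos q)
        rw [← hodd]; ring
      have hA1 : A₂ = 1 := by
        have hd : A₂ ∣ (b + 2) ^ (q + d + 1) :=
          (dvd_pow_self _ (by omega)).trans (h1 ▸ Dvd.intro _ rfl)
        exact Nat.Coprime.eq_one_of_dvd (cB₁₂.pow_right _) hd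
      rw [hA1, one_pow, one_mul] at h1
      have hq : q ≠ 0 := by
        rintro rfl
        have := Nat.one_lt_pow (n := 0 + d + 1) (by omega) (show 1 < b + 2 by omega)
        rw [pow_zero] at h1
        omega
      have hdvd : b + 2 ∣ 2 * b + 1 := by
        rw [← Nat.pow_dvd_pow_iff hq, h1]
        exact pow_dvd_pow _ (by omega)
      obtain ⟨c, hc⟩ := hdvd
      have : c < 2 := by nlinarith
      interval_cases c <;> omega
    · obtain ⟨d, rfl⟩ := Nat.exists_eq_add_of_le hpq
      have h1 : (2 * b + 1) ^ p * (2 * b + 1) ^ d = (b + 2) ^ p * A₂ ^ d := by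
        apply Nat.eq_of_mul_eq_mul_right (pow_pos hB₁.pos p)
        calc _ = A₂ ^ p * (2 * b + 1) ^ (p + d) := by ring
          _ = _ := hodd
          _ = _ := by ring
      have := pow_mul_pow_lt (x := 2 * b + 1) (x' := b + 2) (y := 2 * b + 1) (y' := A₂) (q := d)
        (by omega) (by omega) (by omega) hp
      omega

lemma last_isolated {a b p q r : ℕ} (hb : 2 ≤ b) (hab : b < a) (hr : 0 < r)
    (h : a ^ p * (a + 1) ^ q * (b + 2) ^ r = b ^ p * (b + 1) ^ q * (a + 2) ^ r) :
    a = 8 ∧ b = 3 ∧ p = 2 * q ∧ r = 4 * q := by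
  obtain ⟨e₀, e₁, e₂, A₀, A₁, A₂, hA₀, hA₁, hA₂, ha₀, ha₁, ha₂, cA₀₁, cA₁₂, cA₀₂⟩ :=
    odd_parts a (by omega)
  obtain ⟨f₀, f₁, f₂, B₀, B₁, B₂, hB₀, hB₁, hB₂, hb₀, hb₁, hb₂, cB₀₁, cB₁₂, cB₀₂⟩ :=
    odd_parts b (by omega)
  rw [ha₁, ha₂, hb₁, hb₂, ha₀, hb₀] at h
  obtain ⟨rfl, hodd, hval⟩ := isolated_odd_part hA₀ hA₁ hA₂ hB₀ hB₁ hB₂ cA₀₂.symm cA₁₂.symm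
    cB₀₂.symm cB₁₂.symm hr h
  obtain ⟨hlt, hs⟩ := eq_two_pow_mul ha₂ hb₂ (by omega)
  have he₂ := (even_iff_exponent_pos hA₂ ha₂).mpr (by omega)
  have he₁ := even_iff_exponent_pos hA₁ ha₁
  obtain rfl : e₁ = 0 := by omega
  simp only [pow_zero, one_mul] at ha₁
  subst ha₁
  have hrlt := Nat.mul_lt_mul_of_pos_left hlt hr
  -- The power of two gained by the isolated term has to be compensated by `a` against `b`.
  have hpe : p * f₀ + q * f₁ < p * e₀ := by
    simp only [mul_zero, add_zero] at hval
    omega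
  have hp : 0 < p := by
    rcases Nat.eq_zero_or_pos p with rfl | hp
    · simp at hpe
    · exact hp
  have hf₀e₀ : f₀ < e₀ := Nat.lt_of_mul_lt_mul_left (a := p) (by omega)
  have hB₁le := odd_part_le hb₁
  rcases Nat.lt_or_ge 1 (e₂ - f₂) with hs2 | hs1
  · exfalso
    obtain ⟨k, hk⟩ : ∃ k, e₂ - f₂ = k + 2 := ⟨e₂ - f₂ - 2, by omega⟩
    have ha4 : a + 2 = 4 * (2 ^ k * (b + 2)) := by rw [hs, hk]; ring
    have hkb : b + 2 ≤ 2 ^ k * (b + 2) := Nat.le_mul_of_pos_left _ (by positivity)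
    obtain rfl : e₀ = 1 := exponent_eq_one hA₀ ha₀ (by omega)
    obtain rfl : f₀ = 0 := by omega
    simp only [pow_zero, pow_one, one_mul] at ha₀ hb₀
    have := pow_mul_pow_lt (x := A₀) (x' := B₀) (y := a + 1) (y' := B₁) (q := q)
      (by omega) (by omega) (by omega) hp
    omega
  · have hs1' : e₂ - f₂ = 1 := by omega
    have ha2 : a = 2 * b + 2 := by rw [hs1', pow_one] at hs; omega
    obtain ⟨rfl, rfl⟩ : e₀ = f₁ + 1 ∧ A₀ = B₁ := odd_part_unique hA₀ hB₁ ha₀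
      (by rw [pow_succ, mul_right_comm, ← hb₁, ha2]; ring)
    have hf₁ := even_iff_exponent_pos hB₁ hb₁
    have hf₀ := even_iff_exponent_pos hB₀ hb₀
    obtain rfl : f₀ = 0 := by omega
    simp only [pow_zero, one_mul] at hb₀
    subst hb₀
    rw [ha2] at hodd
    rcases Nat.lt_or_ge q p with hqp | hpq
    · obtain ⟨d, rfl⟩ := Nat.exists_eq_add_of_lt hqp
      have h1 : A₀ ^ (d + 1) * (2 * b + 2 + 1) ^ q = b ^ (q + d + 1) := by
        apply Nat.eq_of_mul_eq_mul_right (pow_pos hB₁.pos q)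
        rw [← hodd]; ring
      have hA1 : A₀ = 1 := by
        have hd : A₀ ∣ b ^ (q + d + 1) :=
          (dvd_pow_self _ (by omega)).trans (h1 ▸ Dvd.intro _ rfl)
        exact Nat.Coprime.eq_one_of_dvd (cB₀₁.symm.pow_right _) hd
      rw [hA1, one_pow, one_mul] at h1
      have hq : q ≠ 0 := by
        rintro rfl
        have := Nat.one_lt_pow (n := 0 + d + 1) (by omega) (show 1 < b by omega)
        rw [pow_zero] at h1
        omega
      have hdvd : b ∣ 2 * b + 2 + 1 := by
        rw [← Nat.pow_dvd_pow_iff hq, h1]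
        exact pow_dvd_pow _ (by omega)
      have hb3 : b ∣ 3 := (Nat.dvd_add_right (Dvd.intro_left 2 rfl)).mp hdvd
      have hb3' : b = 3 := by
        rcases (Nat.dvd_prime Nat.prime_three).mp hb3 with h | h <;> omega
      subst hb3'
      have hpq : 2 * q = q + d + 1 := by
        apply Nat.pow_right_injective (by norm_num : 2 ≤ 3)
        change 3 ^ (2 * q) = 3 ^ (q + d + 1)
        rw [← h1, pow_mul]; norm_num
      have hf : f₁ = 2 := (odd_part_unique hB₁ odd_one hb₁ (show 3 + 1 = 2 ^ 2 * 1 by norm_num)).1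
      have he : e₂ = f₂ + 1 := by omega
      subst hf he
      rw [← hpq] at hval
      refine ⟨by omega, rfl, hpq.symm, ?_⟩
      linarith
    · exfalso
      obtain ⟨d, rfl⟩ := Nat.exists_eq_add_of_le hpq
      have h1 : (2 * b + 2 + 1) ^ p * (2 * b + 2 + 1) ^ d = b ^ p * A₀ ^ d := by
        apply Nat.eq_of_mul_eq_mul_right (pow_pos hB₁.pos p)
        calc _ = A₀ ^ p * (2 * b + 2 + 1) ^ (p + d) := by ring
          _ = _ := hodd
          _ = _ := by ring
      have := pow_mul_pow_lt (x := 2 * b + 2 + 1) (x' := b) (y := 2 * b + 2 + 1) (y' := A₀) (q := d)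
        (by omega) (by omega) (by omega) hp
      omega

lemma product_lt {a b p q r : ℕ} (hab : b < a) (h : ¬ (p = 0 ∧ q = 0 ∧ r = 0)) (hb : 0 < b) :
    b ^ p * (b + 1) ^ q * (b + 2) ^ r < a ^ p * (a + 1) ^ q * (a + 2) ^ r := by
  have h₀ : b ^ p ≤ a ^ p := Nat.pow_le_pow_left (by omega) p
  have h₁ : (b + 1) ^ q ≤ (a + 1) ^ q := Nat.pow_le_pow_left (by omega) q
  have h₂ : (b + 2) ^ r ≤ (a + 2) ^ r := Nat.pow_le_pow_left (by omega) r
  have ha : 0 < a := by omega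
  by_cases hr : r = 0
  · by_cases hq : q = 0
    · have := Nat.pow_lt_pow_left hab (n := p) (by tauto)
      simpa [hr, hq] using this
    · have := Nat.pow_lt_pow_left (show b + 1 < a + 1 by omega) hq
      subst hr
      simpa using mul_lt_mul_of_le_of_lt_of_pos_of_nonneg h₀ this (by positivity) (by positivity)
  · have := Nat.pow_lt_pow_left (show b + 2 < a + 2 by omega) hr
    exact mul_lt_mul_of_le_of_lt_of_pos_of_nonneg (Nat.mul_le_mul h₀ h₁) this (by positivity)
      (by positivity)

/-- Clearing denominators, with each exponent written as a difference of natural numbers. -/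
lemma clear_denominators {a b p p' q q' r r' : ℕ} (ha : 0 < a) (hb : 0 < b)
    (h : (a : ℚ) ^ ((p : ℤ) - p') * ((a : ℚ) + 1) ^ ((q : ℤ) - q') *
        ((a : ℚ) + 2) ^ ((r : ℤ) - r') =
      (b : ℚ) ^ ((p : ℤ) - p') * ((b : ℚ) + 1) ^ ((q : ℤ) - q') *
        ((b : ℚ) + 2) ^ ((r : ℤ) - r')) :
    a ^ p * (a + 1) ^ q * (a + 2) ^ r * (b ^ p' * (b + 1) ^ q' * (b + 2) ^ r') =
      b ^ p * (b + 1) ^ q * (b + 2) ^ r * (a ^ p' * (a + 1) ^ q' * (a + 2) ^ r') := by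
  have ha' : (0 : ℚ) < a := by exact_mod_cast ha
  have hb' : (0 : ℚ) < b := by exact_mod_cast hb
  rw [zpow_sub₀ (by positivity), zpow_sub₀ (by positivity), zpow_sub₀ (by positivity),
    zpow_sub₀ (by positivity), zpow_sub₀ (by positivity), zpow_sub₀ (by positivity)] at h
  simp only [zpow_natCast, div_mul_div_comm] at h
  rw [div_eq_div_iff (by positivity) (by positivity)] at h
  exact_mod_cast h

/-- The classification when at most one exponent is negative; inverting both sides of the identity
reduces the general case to this one. -/
lemma at_most_one_negative {a b : ℕ} (hb : 2 ≤ b) (hab : b < a) {m₁ m₂ m₃ : ℤ}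
    (hm : ¬ (m₁ = 0 ∧ m₂ = 0 ∧ m₃ = 0))
    (hs : (0 ≤ m₁ ∧ 0 ≤ m₂) ∨ (0 ≤ m₁ ∧ 0 ≤ m₃) ∨ (0 ≤ m₂ ∧ 0 ≤ m₃))
    (h : (a : ℚ) ^ m₁ * ((a : ℚ) + 1) ^ m₂ * ((a : ℚ) + 2) ^ m₃ =
      (b : ℚ) ^ m₁ * ((b : ℚ) + 1) ^ m₂ * ((b : ℚ) + 2) ^ m₃) :
    a = 8 ∧ b = 3 ∧ m₁ = 2 * m₂ ∧ m₃ = -4 * m₂ := by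
  have hN := clear_denominators (p := m₁.toNat) (p' := (-m₁).toNat) (q := m₂.toNat)
    (q' := (-m₂).toNat) (r := m₃.toNat) (r' := (-m₃).toNat) (a := a) (b := b) (by omega) (by omega)
    (by simpa only [Int.toNat_sub_toNat_neg] using h)
  have zero_of : ∀ m : ℤ, 0 ≤ m → (-m).toNat = 0 := fun m hm => by omega
  have zero_of_neg : ∀ m : ℤ, m < 0 → m.toNat = 0 := fun m hm => by omega
  rcases lt_or_ge m₁ 0 with h1 | h1
  · exfalso
    rw [zero_of_neg m₁ h1, zero_of m₂ (by omega), zero_of m₃ (by omega)] at hN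
    refine first_isolated hb hab (p := m₃.toNat) (q := m₂.toNat) (r := (-m₁).toNat) (by omega) ?_
    simp only [pow_zero, one_mul, mul_one] at hN
    rw [mul_comm ((a + 2) ^ _), mul_comm ((b + 2) ^ _)]
    exact hN
  rcases lt_or_ge m₂ 0 with h2 | h2
  · exfalso
    rw [zero_of m₁ (by omega), zero_of_neg m₂ h2, zero_of m₃ (by omega)] at hN
    refine middle_isolated hb hab (p := m₁.toNat) (q := m₃.toNat) (r := (-m₂).toNat) (by omega) ?_
    simpa only [pow_zero, one_mul, mul_one] using hN
  rcases lt_or_ge m₃ 0 with h3 | h3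
  · rw [zero_of m₁ (by omega), zero_of m₂ (by omega), zero_of_neg m₃ h3] at hN
    obtain ⟨ha, hb, hp, hr⟩ := last_isolated hb hab (p := m₁.toNat) (q := m₂.toNat)
      (r := (-m₃).toNat) (by omega) (by simpa only [pow_zero, one_mul, mul_one] using hN)
    refine ⟨ha, hb, ?_, ?_⟩ <;> omega
  · exfalso
    rw [zero_of m₁ h1, zero_of m₂ h2, zero_of m₃ h3] at hN
    have := product_lt (p := m₁.toNat) (q := m₂.toNat) (r := m₃.toNat) hab (by omega) (by omega)
    simp only [pow_zero, mul_one] at hN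
    omega

/-- The only integers `n₁ > n₂ ≥ 1` and `(m₁, m₂, m₃) ≠ (0,0,0)` with
`(n₁+1)^(m₁) (n₁+2)^(m₂) (n₁+3)^(m₃) = (n₂+1)^(m₁) (n₂+2)^(m₂) (n₂+3)^(m₃)` (as
positive rationals) are `n₁ = 7`, `n₂ = 2` with `(m₁, m₂, m₃)` a rational multiple of
`(2, 1, -4)`, corresponding to `8² · 9 · 10⁻⁴ = 3² · 4 · 5⁻⁴`. -/
theorem statement7 (n₁ n₂ : ℕ) (hn₂ : 1 ≤ n₂) (hlt : n₂ < n₁)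
    (m₁ m₂ m₃ : ℤ) (hm : ¬ (m₁ = 0 ∧ m₂ = 0 ∧ m₃ = 0)) :
    ((n₁ + 1 : ℚ) ^ m₁ * (n₁ + 2 : ℚ) ^ m₂ * (n₁ + 3 : ℚ) ^ m₃ =
        (n₂ + 1 : ℚ) ^ m₁ * (n₂ + 2 : ℚ) ^ m₂ * (n₂ + 3 : ℚ) ^ m₃) ↔
      (n₁ = 7 ∧ n₂ = 2 ∧
        ∃ r : ℚ, (m₁ : ℚ) = 2 * r ∧ (m₂ : ℚ) = r ∧ (m₃ : ℚ) = -4 * r) := by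
  constructor
  · intro h
    have h' : ((n₁ + 1 : ℕ) : ℚ) ^ m₁ * (((n₁ + 1 : ℕ) : ℚ) + 1) ^ m₂ *
          (((n₁ + 1 : ℕ) : ℚ) + 2) ^ m₃ =
        ((n₂ + 1 : ℕ) : ℚ) ^ m₁ * (((n₂ + 1 : ℕ) : ℚ) + 1) ^ m₂ *
          (((n₂ + 1 : ℕ) : ℚ) + 2) ^ m₃ := by
      have h1 : ∀ x : ℚ, x + 1 + 1 = x + 2 := fun x => by ring
      have h2 : ∀ x : ℚ, x + 1 + 2 = x + 3 := fun x => by ring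
      push_cast
      rw [h1, h1, h2, h2]
      exact h
    have hsol : n₁ + 1 = 8 ∧ n₂ + 1 = 3 ∧ m₁ = 2 * m₂ ∧ m₃ = -4 * m₂ := by
      by_cases hs : (0 ≤ m₁ ∧ 0 ≤ m₂) ∨ (0 ≤ m₁ ∧ 0 ≤ m₃) ∨ (0 ≤ m₂ ∧ 0 ≤ m₃)
      · exact at_most_one_negative (by omega) (by omega) hm hs h'
      · -- At least two exponents are negative: invert both sides.
        have hneg := at_most_one_negative (a := n₁ + 1) (b := n₂ + 1) (m₁ := -m₁) (m₂ := -m₂)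
          (m₃ := -m₃) (by omega) (by omega) (by omega) (by omega)
          (by simpa only [zpow_neg, ← mul_inv] using congrArg (·⁻¹) h')
        omega
    obtain ⟨h1, h2, h3, h4⟩ := hsol
    refine ⟨by omega, by omega, m₂, ?_, rfl, ?_⟩
    · rw [h3]; push_cast; ring
    · rw [h4]; push_cast; ring
  · rintro ⟨rfl, rfl, r, h1, rfl, h3⟩
    obtain rfl : m₁ = 2 * m₂ := by exact_mod_cast h1
    obtain rfl : m₃ = -4 * m₂ := by exact_mod_cast h3
    simp only [zpow_mul, ← mul_zpow]
    norm_num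
end

section
/- Let ε > δ ≥ 0 and C > 0, and let (A_n)_{n≥0} be a sequence of complex-valued random variables with A_0 = 0 such that for all integers N > N' ≥ 0, E[|A_N - A_{N'}|²] ≤ C (N - N') N^{2δ}. Then there exists a constant K_{ε,δ} > 0, depending only on ε and δ, such that for all M > 0, P( sup_{N ≥ 1} |A_N| / N^{1/2+ε} ≥ M ) ≤ K_{ε,δ} C M^{-2}. In particular, almost surely A_N = O(N^{1/2+ε}). -/
/-!
The proof is the Rademacher–Menshov chaining argument. For `N < 2 ^ n`, truncating the binary
expansion of `N` digit by digit writes `A N` as a sum of `n` dyadic increments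
`A (m 2^j) - A (2 ⌊m/2⌋ 2^j)` with `j < n` and `m = ⌊N / 2^j⌋ < 2^(n-j)`. By Cauchy–Schwarz,
`‖A N‖² ≤ n * dyadicEnergy A n`, where `dyadicEnergy A n` sums the squares of all such increments
(`norm_sq_le_dyadicEnergy`), and its expectation is at most `C n 2^(n(1+2δ))`
(`lintegral_dyadicEnergy_le`). When `2^(n-1) ≤ N < 2^n`, dividing by `N^(1+2ε)` costs a factor
`2^(1+2ε) 2^(-n(1+2ε))`, so the sum over `n` of the normalized energies is a random variable `X`
that dominates `sup_N ‖A N‖² / N^(1+2ε)` and has `E X ≤ C 2^(1+2ε) ∑ n² 2^(-2n(ε-δ))`, which is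
finite since `δ < ε`. Markov's inequality for `X` gives the tail bound, and finiteness of `X`
almost everywhere gives the almost sure bound.
-/

open MeasureTheory ProbabilityTheory

open Finset in
/-- The sum of the squares of all dyadic increments of `a` up to `2 ^ n`, over all scales `j < n`.
For even `m` the increment is zero, so only odd `m` contribute. -/
noncomputable def dyadicEnergy (a : ℕ → ℂ) (n : ℕ) : ℝ :=
  ∑ j ∈ range n, ∑ m ∈ range (2 ^ (n - j)), ‖a (m * 2 ^ j) - a (m / 2 * 2 * 2 ^ j)‖ ^ 2

lemma dyadicEnergy_nonneg (a : ℕ → ℂ) (n : ℕ) : 0 ≤ dyadicEnergy a n := by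
  unfold dyadicEnergy; positivity

open Finset in
/-- The increments along the binary truncations of `N` telescope to `a N`. -/
lemma norm_sq_le_dyadicEnergy (a : ℕ → ℂ) (h0 : a 0 = 0) {n N : ℕ} (hN : N < 2 ^ n) :
    ‖a N‖ ^ 2 ≤ n * dyadicEnergy a n := by
  have htel : a N = ∑ j ∈ range n,
      (a (N / 2 ^ j * 2 ^ j) - a (N / 2 ^ j / 2 * 2 * 2 ^ j)) := by
    have h := Finset.sum_range_sub' (fun j => a (N / 2 ^ j * 2 ^ j)) n
    simp only [pow_zero, Nat.div_one, mul_one, Nat.div_eq_of_lt hN, zero_mul, h0, sub_zero] at h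
    rw [← h]
    refine sum_congr rfl fun j _ => ?_
    rw [Nat.div_div_eq_div_mul, ← pow_succ, mul_assoc, ← pow_succ']
  calc ‖a N‖ ^ 2
      ≤ (∑ j ∈ range n, ‖a (N / 2 ^ j * 2 ^ j) - a (N / 2 ^ j / 2 * 2 * 2 ^ j)‖) ^ 2 := by
        conv_lhs => rw [htel]
        gcongr
        exact norm_sum_le _ _
    _ ≤ n * ∑ j ∈ range n, ‖a (N / 2 ^ j * 2 ^ j) - a (N / 2 ^ j / 2 * 2 * 2 ^ j)‖ ^ 2 := by
        simpa using sq_sum_le_card_mul_sum_sq (s := range n)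
          (f := fun j => ‖a (N / 2 ^ j * 2 ^ j) - a (N / 2 ^ j / 2 * 2 * 2 ^ j)‖)
    _ ≤ n * dyadicEnergy a n := by
        unfold dyadicEnergy
        gcongr with j hj
        have hm : N / 2 ^ j ∈ range (2 ^ (n - j)) := by
          rw [mem_range, Nat.div_lt_iff_lt_mul (by positivity), ← pow_add,
            Nat.sub_add_cancel (mem_range.1 hj).le]
          exact hN
        exact single_le_sum
          (f := fun m => ‖a (m * 2 ^ j) - a (m / 2 * 2 * 2 ^ j)‖ ^ 2)
          (fun _ _ => by positivity) hm

lemma measurable_dyadicEnergy {Ω : Type} [MeasurableSpace Ω] {A : ℕ → Ω → ℂ}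
    (hA : ∀ n, Measurable (A n)) (n : ℕ) :
    Measurable fun ω => dyadicEnergy (fun k => A k ω) n := by
  unfold dyadicEnergy
  exact Finset.measurable_sum _ fun j _ => Finset.measurable_sum _ fun m _ =>
    (((hA _).sub (hA _)).norm.pow_const 2)

open Finset in
lemma lintegral_dyadicEnergy_le {Ω : Type} [MeasurableSpace Ω] {μ : Measure Ω} {A : ℕ → Ω → ℂ}
    (hA : ∀ n, Measurable (A n)) {C δ : ℝ} (hC : 0 < C) (hδ : 0 ≤ δ)
    (hinc : ∀ N' N : ℕ, N' < N →
      ∫⁻ ω, ENNReal.ofReal (‖A N ω - A N' ω‖ ^ 2) ∂μ ≤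
        ENNReal.ofReal (C * ((N : ℝ) - (N' : ℝ)) * (N : ℝ) ^ (2 * δ))) (n : ℕ) :
    ∫⁻ ω, ENNReal.ofReal (dyadicEnergy (fun k => A k ω) n) ∂μ ≤
      ENNReal.ofReal (C * n * ((2 : ℝ) ^ (1 + 2 * δ)) ^ n) := by
  have hterm : ∀ j ∈ range n, ∀ m ∈ range (2 ^ (n - j)),
      ∫⁻ ω, ENNReal.ofReal (‖A (m * 2 ^ j) ω - A (m / 2 * 2 * 2 ^ j) ω‖ ^ 2) ∂μ ≤
        ENNReal.ofReal (C * 2 ^ j * ((2 : ℝ) ^ n) ^ (2 * δ)) := by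
    intro j hj m hm
    rcases Nat.even_or_odd' m with ⟨q, rfl | rfl⟩
    · have : 2 * q / 2 * 2 = 2 * q := by omega
      rw [this]
      simp
    · have h2 : (2 * q + 1) / 2 * 2 = 2 * q := by omega
      rw [h2]
      refine (hinc _ _ (by gcongr; omega)).trans (ENNReal.ofReal_le_ofReal ?_)
      have hle : (2 * q + 1) * 2 ^ j ≤ 2 ^ n := by
        have h := Nat.mul_le_mul_right (2 ^ j) (mem_range.1 hm).le
        rwa [← pow_add, Nat.sub_add_cancel (mem_range.1 hj).le] at h
      have hle' : (((2 * q + 1) * 2 ^ j : ℕ) : ℝ) ≤ 2 ^ n := by exact_mod_cast hle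
      have hd : (((2 * q + 1) * 2 ^ j : ℕ) : ℝ) - ((2 * q * 2 ^ j : ℕ) : ℝ) = 2 ^ j := by
        push_cast; ring
      rw [hd]
      gcongr
  have hmeas : ∀ j m : ℕ, Measurable fun ω =>
      ENNReal.ofReal (‖A (m * 2 ^ j) ω - A (m / 2 * 2 * 2 ^ j) ω‖ ^ 2) := fun j m =>
    (((hA _).sub (hA _)).norm.pow_const 2).ennreal_ofReal
  calc ∫⁻ ω, ENNReal.ofReal (dyadicEnergy (fun k => A k ω) n) ∂μ
      = ∑ j ∈ range n, ∑ m ∈ range (2 ^ (n - j)),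
        ∫⁻ ω, ENNReal.ofReal (‖A (m * 2 ^ j) ω - A (m / 2 * 2 * 2 ^ j) ω‖ ^ 2) ∂μ := by
        have : ∀ ω, ENNReal.ofReal (dyadicEnergy (fun k => A k ω) n) =
            ∑ j ∈ range n, ∑ m ∈ range (2 ^ (n - j)),
              ENNReal.ofReal (‖A (m * 2 ^ j) ω - A (m / 2 * 2 * 2 ^ j) ω‖ ^ 2) := by
          intro ω
          unfold dyadicEnergy
          rw [ENNReal.ofReal_sum_of_nonneg (fun _ _ => by positivity)]
          refine sum_congr rfl fun j _ => ?_
          rw [ENNReal.ofReal_sum_of_nonneg (fun _ _ => by positivity)]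
        simp_rw [this]
        rw [lintegral_finsetSum _ fun j _ => Finset.measurable_sum _ fun m _ => hmeas j m]
        refine sum_congr rfl fun j _ => ?_
        rw [lintegral_finsetSum _ fun m _ => hmeas j m]
    _ ≤ ∑ j ∈ range n, ∑ m ∈ range (2 ^ (n - j)),
        ENNReal.ofReal (C * 2 ^ j * ((2 : ℝ) ^ n) ^ (2 * δ)) :=
        sum_le_sum fun j hj => sum_le_sum fun m hm => hterm j hj m hm
    _ = ENNReal.ofReal (∑ j ∈ range n, ∑ m ∈ range (2 ^ (n - j)),
        (C * 2 ^ j * ((2 : ℝ) ^ n) ^ (2 * δ))) := by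
        rw [ENNReal.ofReal_sum_of_nonneg (fun _ _ => by positivity)]
        refine sum_congr rfl fun j _ => ?_
        rw [ENNReal.ofReal_sum_of_nonneg (fun _ _ => by positivity)]
    _ = ENNReal.ofReal (C * n * ((2 : ℝ) ^ (1 + 2 * δ)) ^ n) := by
        congr 1
        have hj : ∀ j ∈ range n, ∑ m ∈ range (2 ^ (n - j)),
            (C * 2 ^ j * ((2 : ℝ) ^ n) ^ (2 * δ)) = C * ((2 : ℝ) ^ (1 + 2 * δ)) ^ n := by
          intro j hj
          have h1 : (2 : ℝ) ^ (n - j) * 2 ^ j = 2 ^ n := by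
            rw [← pow_add, Nat.sub_add_cancel (mem_range.1 hj).le]
          have h2 : ((2 : ℝ) ^ n) ^ (2 * δ) = ((2 : ℝ) ^ (2 * δ)) ^ n :=
            (Real.rpow_pow_comm (by norm_num) _ _).symm
          rw [sum_const, card_range, nsmul_eq_mul, Real.rpow_add (by norm_num), Real.rpow_one,
            mul_pow, h2, ← h1]
          push_cast
          ring
        rw [sum_congr rfl hj, sum_const, card_range, nsmul_eq_mul]
        ring

/-- With `n` the number of binary digits of `N`, the normalized value at `N` is controlled by the
energy of the dyadic block containing `N`. -/
lemma norm_div_rpow_sq_le {ε : ℝ} (hε : 0 ≤ ε) (a : ℕ → ℂ) (h0 : a 0 = 0) {N : ℕ} (hN : 1 ≤ N) :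
    (‖a N‖ / (N : ℝ) ^ ((1 : ℝ) / 2 + ε)) ^ 2 ≤
      ((Nat.log 2 N + 1 : ℕ) : ℝ) * (2 : ℝ) ^ (1 + 2 * ε) /
        ((2 : ℝ) ^ (1 + 2 * ε)) ^ (Nat.log 2 N + 1) * dyadicEnergy a (Nat.log 2 N + 1) := by
  have hlt : N < 2 ^ (Nat.log 2 N + 1) := Nat.lt_pow_succ_log_self (by norm_num) N
  have hge : 2 ^ Nat.log 2 N ≤ N := Nat.pow_log_le_self 2 (by omega)
  have hge' : (2 : ℝ) ^ (Nat.log 2 N) ≤ N := by exact_mod_cast hge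
  have hN0 : (0 : ℝ) < N := by exact_mod_cast hN
  have hpow : ((N : ℝ) ^ ((1 : ℝ) / 2 + ε)) ^ 2 = (N : ℝ) ^ (1 + 2 * ε) := by
    rw [← Real.rpow_mul_natCast hN0.le]
    congr 1
    push_cast
    ring
  have hden : ((2 : ℝ) ^ (1 + 2 * ε)) ^ (Nat.log 2 N) ≤ (N : ℝ) ^ (1 + 2 * ε) := by
    rw [Real.rpow_pow_comm (by norm_num)]
    gcongr
  have hE := norm_sq_le_dyadicEnergy a h0 hlt
  have hE0 := dyadicEnergy_nonneg a (Nat.log 2 N + 1)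
  calc (‖a N‖ / (N : ℝ) ^ ((1 : ℝ) / 2 + ε)) ^ 2
      = ‖a N‖ ^ 2 / (N : ℝ) ^ (1 + 2 * ε) := by rw [div_pow, hpow]
    _ ≤ ((Nat.log 2 N + 1 : ℕ) * dyadicEnergy a (Nat.log 2 N + 1)) /
        ((2 : ℝ) ^ (1 + 2 * ε)) ^ (Nat.log 2 N) := by gcongr
    _ = _ := by
        rw [pow_succ]
        field_simp

/-- Maximal-inequality lemma: if `A 0 = 0` and
`E[|A_N - A_{N'}|²] ≤ C (N - N') N^(2δ)` for all `N > N' ≥ 0`, with `ε > δ ≥ 0`, then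
there is `K = K(ε, δ) > 0` with
`P(sup_{N ≥ 1} |A_N| / N^(1/2+ε) ≥ M) ≤ K C M⁻²` for every `M > 0`; in particular,
almost surely `A_N = O(N^(1/2+ε))`. -/
theorem statement8 (ε δ : ℝ) (hδ : 0 ≤ δ) (hεδ : δ < ε) :
    ∃ K : ℝ, 0 < K ∧
      ∀ (Ω : Type) [MeasureSpace Ω] [IsProbabilityMeasure (ℙ : Measure Ω)],
        ∀ C : ℝ, 0 < C →
        ∀ A : ℕ → Ω → ℂ, (∀ n, Measurable (A n)) → (∀ ω, A 0 ω = 0) →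
        (∀ N' N : ℕ, N' < N →
          ∫⁻ ω, ENNReal.ofReal (‖A N ω - A N' ω‖ ^ 2) ∂(ℙ : Measure Ω) ≤
            ENNReal.ofReal (C * ((N : ℝ) - (N' : ℝ)) * (N : ℝ) ^ (2 * δ))) →
        (∀ M : ℝ, 0 < M →
          (ℙ : Measure Ω) {ω | ENNReal.ofReal M ≤
              ⨆ (N : ℕ) (_ : 1 ≤ N),
                ENNReal.ofReal (‖A N ω‖ / (N : ℝ) ^ ((1 : ℝ) / 2 + ε))} ≤
            ENNReal.ofReal (K * C / M ^ 2)) ∧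
        ∀ᵐ ω ∂(ℙ : Measure Ω), ∃ c : ℝ, ∀ N : ℕ, 1 ≤ N →
          ‖A N ω‖ ≤ c * (N : ℝ) ^ ((1 : ℝ) / 2 + ε) := by
  -- `a ^ n` and `b ^ n` are the normalization and the energy growth of the `n`-th dyadic block.
  set a : ℝ := (2 : ℝ) ^ (1 + 2 * ε) with ha
  set b : ℝ := (2 : ℝ) ^ (1 + 2 * δ) with hb
  have ha0 : 0 < a := by positivity
  have hb0 : 0 < b := by positivity
  have hab : b < a := Real.rpow_lt_rpow_of_exponent_lt (by norm_num) (by linarith)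
  have hsum : Summable fun n : ℕ => a * ((n : ℝ) ^ 2 * (b / a) ^ n) := by
    refine (summable_pow_mul_geometric_of_norm_lt_one 2 ?_).mul_left a
    rw [Real.norm_of_nonneg (by positivity), div_lt_one ha0]
    exact hab
  have hK0 : 0 ≤ ∑' n : ℕ, a * ((n : ℝ) ^ 2 * (b / a) ^ n) :=
    tsum_nonneg fun n => by positivity
  refine ⟨∑' n : ℕ, a * ((n : ℝ) ^ 2 * (b / a) ^ n) + 1, by linarith, ?_⟩
  set K := ∑' n : ℕ, a * ((n : ℝ) ^ 2 * (b / a) ^ n) with hK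
  intro Ω _ _ C hC A hA hA0 hinc
  let X : Ω → ENNReal := fun ω =>
    ∑' n : ℕ, ENNReal.ofReal (n * a / a ^ n * dyadicEnergy (fun k => A k ω) n)
  have hmeas : ∀ n : ℕ, Measurable fun ω =>
      ENNReal.ofReal (n * a / a ^ n * dyadicEnergy (fun k => A k ω) n) := fun n =>
    ((measurable_dyadicEnergy hA n).const_mul _).ennreal_ofReal
  have hXm : Measurable X := Measurable.tsum hmeas
  have hXint : ∫⁻ ω, X ω ∂(ℙ : Measure Ω) ≤ ENNReal.ofReal (K * C) := by
    calc ∫⁻ ω, X ω ∂(ℙ : Measure Ω)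
        = ∑' n : ℕ, ∫⁻ ω, ENNReal.ofReal (n * a / a ^ n * dyadicEnergy (fun k => A k ω) n) :=
          lintegral_tsum fun n => (hmeas n).aemeasurable
      _ ≤ ∑' n : ℕ, ENNReal.ofReal (a * ((n : ℝ) ^ 2 * (b / a) ^ n) * C) := by
          refine ENNReal.tsum_le_tsum fun n => ?_
          have hc : (0 : ℝ) ≤ n * a / a ^ n := by positivity
          simp_rw [ENNReal.ofReal_mul hc]
          rw [lintegral_const_mul _ (measurable_dyadicEnergy hA n).ennreal_ofReal]
          refine (mul_le_mul_right (lintegral_dyadicEnergy_le hA hC hδ hinc n) _).trans ?_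
          rw [← ENNReal.ofReal_mul hc, ← hb]
          refine ENNReal.ofReal_le_ofReal (le_of_eq ?_)
          rw [div_pow]
          ring
      _ = ENNReal.ofReal (K * C) := by
          rw [← ENNReal.ofReal_tsum_of_nonneg (fun n => by positivity) (hsum.mul_right C),
            tsum_mul_right]
  have hdom : ∀ ω (N : ℕ), 1 ≤ N →
      ENNReal.ofReal (‖A N ω‖ / (N : ℝ) ^ ((1 : ℝ) / 2 + ε)) ≤ X ω ^ (2⁻¹ : ℝ) := by
    intro ω N hN
    rw [ENNReal.le_rpow_inv_iff (by norm_num), ENNReal.rpow_ofNat,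
      ← ENNReal.ofReal_pow (by positivity)]
    exact (ENNReal.ofReal_le_ofReal
      (norm_div_rpow_sq_le (hδ.trans hεδ.le) (fun k => A k ω) (hA0 ω) hN)).trans
      (ENNReal.le_tsum (Nat.log 2 N + 1))
  refine ⟨fun M hM => ?_, ?_⟩
  · have hM2 : (0 : ℝ) < M ^ 2 := by positivity
    calc (ℙ : Measure Ω) {ω | ENNReal.ofReal M ≤ ⨆ (N : ℕ) (_ : 1 ≤ N),
            ENNReal.ofReal (‖A N ω‖ / (N : ℝ) ^ ((1 : ℝ) / 2 + ε))}
        ≤ (ℙ : Measure Ω) {ω | ENNReal.ofReal (M ^ 2) ≤ X ω} := by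
          refine measure_mono fun ω hω => ?_
          have h : ENNReal.ofReal M ≤ X ω ^ (2⁻¹ : ℝ) :=
            le_trans hω (iSup₂_le fun N hN => hdom ω N hN)
          rwa [ENNReal.le_rpow_inv_iff (by norm_num), ENNReal.rpow_ofNat,
            ← ENNReal.ofReal_pow hM.le] at h
      _ ≤ (∫⁻ ω, X ω ∂(ℙ : Measure Ω)) / ENNReal.ofReal (M ^ 2) :=
          meas_ge_le_lintegral_div hXm.aemeasurable (by simpa using hM.ne') ENNReal.ofReal_ne_top
      _ ≤ ENNReal.ofReal (K * C) / ENNReal.ofReal (M ^ 2) := by gcongr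
      _ = ENNReal.ofReal (K * C / M ^ 2) := (ENNReal.ofReal_div_of_pos hM2).symm
      _ ≤ ENNReal.ofReal ((K + 1) * C / M ^ 2) := by
          refine ENNReal.ofReal_le_ofReal ?_
          gcongr
          linarith
  · filter_upwards [ae_lt_top hXm (hXint.trans_lt ENNReal.ofReal_lt_top).ne] with ω hω
    refine ⟨(X ω ^ (2⁻¹ : ℝ)).toReal, fun N hN => ?_⟩
    have hN0 : (0 : ℝ) < N := by exact_mod_cast hN
    rw [← div_le_iff₀ (by positivity)]
    exact (ENNReal.ofReal_le_iff_le_toReal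
      (ENNReal.rpow_ne_top_of_nonneg (by norm_num) hω.ne)).1 (hdom ω N hN)
end

section
/- Let 𝒩(N) be the number of integer quadruples (a,b,c,d) with 0 < a < b < c < d ≤ N and a(a+1)d(d+1) = b(b+1)c(c+1), and 𝒩_=(N) the number of such quadruples with 0 < a < b = c < d ≤ N. Then for every ε > 0 there exists a constant C_ε > 0, independent of N, such that for all N ≥ 8: N/2 ≤ 8 𝒩(N) + 4 𝒩_=(N) ≤ C_ε N^{3/2+ε}. In particular, the total number of quadruples 0 < a < b ≤ c < d ≤ N solving a(a+1)d(d+1) = b(b+1)c(c+1) is O_ε(N^{3/2+ε}). -/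
/-!
Lower bound: `t(t+1)(6t+2)(6t+3) = (2t+1)(2t+2)·3t(3t+1)` gives the solutions
`(t, 2t+1, 3t, 6t+2)`, with `b = c` exactly at `t = 1`; together with the sporadic solution
`(1, 2, 5, 9)` they suffice for every `N ≥ 8`.

Upper bound: with `A = 2a+1`, …, `D = 2d+1` the equation reads
`(A²-1)(D²-1) = (B²-1)(C²-1)`. Put `k = AD - BC`. Then `k(AD+BC) = A²+D²-B²-C²`, which forces
`k > 0` and `kA < D`, and eliminating `BC` gives
`(D-(k+1)A-(C-B)) (D-(k+1)A+(C-B)) = k(k+2)(A²-1)` (`sol_key`). So a solution is determined by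
`A`, `k` and the divisor `F = D-(k+1)A+(C-B)` of the positive number `k(k+2)(A²-1)`
(`sol_determined`). Grouping by `m = kA ≤ 3N`, there is a choice of `m`, a divisor `A` of `m`
and a divisor `F` of a number at most `27N²`; the divisor bound `d(n) ≪ n^δ`
(`exists_card_divisors_le`) then gives `O(N^(1+ε))` solutions, which is stronger than required.
-/

/-- `𝒩(N)`: the number of quadruples `0 < a < b < c < d ≤ N` with
`a(a+1)d(d+1) = b(b+1)c(c+1)`. -/
def solCount (N : ℕ) : ℕ :=
  (((Finset.Icc 1 N) ×ˢ (Finset.Icc 1 N) ×ˢ (Finset.Icc 1 N) ×ˢ (Finset.Icc 1 N)).filter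
    (fun x : ℕ × ℕ × ℕ × ℕ =>
      x.1 < x.2.1 ∧ x.2.1 < x.2.2.1 ∧ x.2.2.1 < x.2.2.2 ∧
        x.1 * (x.1 + 1) * (x.2.2.2 * (x.2.2.2 + 1)) =
          x.2.1 * (x.2.1 + 1) * (x.2.2.1 * (x.2.2.1 + 1)))).card

/-- `𝒩₌(N)`: the number of quadruples `0 < a < b = c < d ≤ N` with
`a(a+1)d(d+1) = b(b+1)c(c+1)`. -/
def solEqCount (N : ℕ) : ℕ :=
  (((Finset.Icc 1 N) ×ˢ (Finset.Icc 1 N) ×ˢ (Finset.Icc 1 N)).filter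
    (fun x : ℕ × ℕ × ℕ =>
      x.1 < x.2.1 ∧ x.2.1 < x.2.2 ∧
        x.1 * (x.1 + 1) * (x.2.2 * (x.2.2 + 1)) =
          x.2.1 * (x.2.1 + 1) * (x.2.1 * (x.2.1 + 1)))).card

/-- The total number of quadruples `0 < a < b ≤ c < d ≤ N` with
`a(a+1)d(d+1) = b(b+1)c(c+1)`. -/
def solTotalCount (N : ℕ) : ℕ :=
  (((Finset.Icc 1 N) ×ˢ (Finset.Icc 1 N) ×ˢ (Finset.Icc 1 N) ×ˢ (Finset.Icc 1 N)).filter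
    (fun x : ℕ × ℕ × ℕ × ℕ =>
      x.1 < x.2.1 ∧ x.2.1 ≤ x.2.2.1 ∧ x.2.2.1 < x.2.2.2 ∧
        x.1 * (x.1 + 1) * (x.2.2.2 * (x.2.2.2 + 1)) =
          x.2.1 * (x.2.1 + 1) * (x.2.2.1 * (x.2.2.1 + 1)))).card

/-- The factor of `d(n) / n^δ` at a prime `p` is at most `1` for `p ≥ 2^(1/δ)`, and bounded
uniformly for all `p`. -/
lemma exists_succ_le_rpow (δ : ℝ) (hδ : 0 < δ) :
    ∃ (K : ℝ) (P : ℕ), 1 ≤ K ∧ ∀ p e : ℕ, 2 ≤ p →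
      ((e : ℝ) + 1) ≤ (if p < P then K else 1) * ((p : ℝ) ^ e) ^ δ := by
  have hl : 0 < Real.log 2 := Real.log_pos (by norm_num)
  refine ⟨max 1 (1 / (δ * Real.log 2)), ⌈(2 : ℝ) ^ (1 / δ)⌉₊, le_max_left _ _, ?_⟩
  intro p e hp
  have hp' : (2 : ℝ) ≤ p := by exact_mod_cast hp
  have hpow : ((p : ℝ) ^ e) ^ δ = ((p : ℝ) ^ δ) ^ e := by
    rw [← Real.rpow_natCast, ← Real.rpow_natCast, ← Real.rpow_mul (by positivity),
      ← Real.rpow_mul (by positivity), mul_comm]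
  split_ifs with h
  · set K := max 1 (1 / (δ * Real.log 2)) with hK
    have h1 : (1 : ℝ) ≤ K := le_max_left _ _
    have h2 : 1 ≤ K * (δ * Real.log 2) := by
      have : 1 / (δ * Real.log 2) ≤ K := le_max_right _ _
      rwa [div_le_iff₀ (by positivity)] at this
    have h3 : 1 + e * (δ * Real.log 2) ≤ ((p : ℝ) ^ e) ^ δ := by
      calc 1 + e * (δ * Real.log 2) ≤ Real.exp (e * (δ * Real.log 2)) := by
            linarith [Real.add_one_le_exp (e * (δ * Real.log 2))]
        _ = ((2 : ℝ) ^ e) ^ δ := by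
            rw [← Real.rpow_natCast, ← Real.rpow_mul (by norm_num),
              Real.rpow_def_of_pos (by norm_num)]
            ring_nf
        _ ≤ _ := by gcongr
    have he : (0 : ℝ) ≤ e := by positivity
    calc (e : ℝ) + 1 ≤ K * (1 + e * (δ * Real.log 2)) := by nlinarith
      _ ≤ _ := by gcongr
  · rw [one_mul, hpow]
    have h2 : (2 : ℝ) ≤ (p : ℝ) ^ δ := by
      have : (2 : ℝ) ^ (1 / δ) ≤ p := (Nat.le_ceil _).trans (by exact_mod_cast not_lt.mp h)
      calc (2 : ℝ) = ((2 : ℝ) ^ (1 / δ)) ^ δ := by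
            rw [← Real.rpow_mul (by norm_num), one_div_mul_cancel hδ.ne', Real.rpow_one]
        _ ≤ _ := by gcongr
    calc (e : ℝ) + 1 ≤ (2 : ℝ) ^ e := by exact_mod_cast Nat.lt_two_pow_self
      _ ≤ _ := by gcongr

/-- The divisor bound `d(n) ≪ n^δ`. -/
lemma exists_card_divisors_le (δ : ℝ) (hδ : 0 < δ) :
    ∃ C : ℝ, 1 ≤ C ∧ ∀ n : ℕ, n ≠ 0 → (n.divisors.card : ℝ) ≤ C * (n : ℝ) ^ δ := by
  obtain ⟨K, P, hK, h⟩ := exists_succ_le_rpow δ hδ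
  refine ⟨K ^ P, one_le_pow₀ hK, fun n hn => ?_⟩
  have hn' : (n : ℝ) ^ δ = ∏ p ∈ n.primeFactors, ((p : ℝ) ^ n.factorization p) ^ δ := by
    rw [Real.finsetProd_rpow _ _ (fun _ _ => by positivity)]
    congr 1
    conv_lhs => rw [← Nat.prod_factorization_pow_eq_self hn]
    simp [Finsupp.prod]
  rw [Nat.card_divisors hn, hn']
  push_cast
  calc ∏ p ∈ n.primeFactors, ((n.factorization p : ℝ) + 1)
      ≤ ∏ p ∈ n.primeFactors,
          ((if p < P then K else 1) * ((p : ℝ) ^ n.factorization p) ^ δ) :=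
        Finset.prod_le_prod (fun _ _ => by positivity)
          (fun p hp => h p _ (Nat.prime_of_mem_primeFactors hp).two_le)
    _ = (∏ p ∈ n.primeFactors, if p < P then K else 1) *
          ∏ p ∈ n.primeFactors, ((p : ℝ) ^ n.factorization p) ^ δ := Finset.prod_mul_distrib
    _ ≤ _ := by
        gcongr
        rw [← Finset.prod_filter, Finset.prod_const]
        refine pow_le_pow_right₀ hK ?_
        calc _ ≤ (Finset.range P).card := Finset.card_le_card (fun p hp => by
                simpa using (Finset.mem_filter.mp hp).2)
          _ = P := Finset.card_range P

/-- The structure of a solution in the variables `A = 2a+1`, …, `D = 2d+1`, where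
`k = AD - BC`. -/
lemma sol_key (A B C D k : ℤ) (hA : 3 ≤ A) (hAB : A < B) (hBC : B ≤ C) (hCD : C < D)
    (h : (A ^ 2 - 1) * (D ^ 2 - 1) = (B ^ 2 - 1) * (C ^ 2 - 1)) (hk : k = A * D - B * C) :
    0 < k ∧ k * A < D ∧
      (D - (k + 1) * A - (C - B)) * (D - (k + 1) * A + (C - B)) = k * (k + 2) * (A ^ 2 - 1) ∧
      0 < D - (k + 1) * A + (C - B) := by
  have e1 : k * (A * D + B * C) = A ^ 2 + D ^ 2 - B ^ 2 - C ^ 2 := by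
    rw [hk]; linear_combination h
  have hBCpos : 0 < B * C := by nlinarith
  have hADpos : 0 < A * D := by nlinarith
  have hk0 : 0 < k := by
    -- With `x = A² - 1`, `y = B² - 1`, `z = C² - 1`, `w = D² - 1` and `xw = yz`,
    -- one has `x (x + w - y - z) = (y - x) (z - x) > 0`.
    have hy : 0 < B ^ 2 - A ^ 2 := by nlinarith
    have hz : 0 < C ^ 2 - A ^ 2 := by nlinarith
    have hx : 0 < A ^ 2 - 1 := by nlinarith
    have hp : 0 < (A ^ 2 - 1) * (A ^ 2 + D ^ 2 - B ^ 2 - C ^ 2) := by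
      have := mul_pos hy hz
      linarith [show (A ^ 2 - 1) * (A ^ 2 + D ^ 2 - B ^ 2 - C ^ 2)
        = (B ^ 2 - A ^ 2) * (C ^ 2 - A ^ 2) by linear_combination h]
    have hq := pos_of_mul_pos_right hp hx.le
    rw [← e1] at hq
    exact pos_of_mul_pos_left hq (by positivity)
  have hkA : k * A < D := by
    have h1 : k * A * D < D * D := by nlinarith [mul_pos hk0 hBCpos]
    exact lt_of_mul_lt_mul_right h1 (by linarith)
  have e2 : (D - (k + 1) * A - (C - B)) * (D - (k + 1) * A + (C - B))
      = k * (k + 2) * (A ^ 2 - 1) := by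
    have hBC' : B * C = A * D - k := by linarith
    rw [hBC'] at e1
    linear_combination (-1) * e1 + 2 * hBC'
  refine ⟨hk0, hkA, e2, ?_⟩
  -- The two factors have the same sign and their sum exceeds `-2A`; if both were negative, their
  -- product would be less than `A²`, whereas it is at least `3 (A² - 1)`.
  by_contra hneg
  push Not at hneg
  set F := D - (k + 1) * A + (C - B) with hF
  set E := D - (k + 1) * A - (C - B) with hE
  have hs : -2 * A < E + F := by rw [hE, hF]; linarith
  have hr : 3 * (A ^ 2 - 1) ≤ E * F := by
    rw [e2]
    have : 0 ≤ A ^ 2 - 1 := by nlinarith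
    have : 3 ≤ k * (k + 2) := by nlinarith
    nlinarith
  have hE0 : E ≤ 0 := by
    by_contra hE1
    push Not at hE1
    nlinarith
  nlinarith [sq_nonneg (E - F)]

lemma sol_determined (A k B C D B' C' D' : ℤ) (hA : 3 ≤ A) (hk0 : 0 < k)
    (hB : 0 < B) (hC : 0 < C) (hB' : 0 < B') (hC' : 0 < C')
    (hk : k = A * D - B * C) (hk' : k = A * D' - B' * C')
    (e : (D - (k + 1) * A - (C - B)) * (D - (k + 1) * A + (C - B)) = k * (k + 2) * (A ^ 2 - 1))
    (e' : (D' - (k + 1) * A - (C' - B')) * (D' - (k + 1) * A + (C' - B'))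
      = k * (k + 2) * (A ^ 2 - 1))
    (hF : D - (k + 1) * A + (C - B) = D' - (k + 1) * A + (C' - B')) :
    B = B' ∧ C = C' ∧ D = D' := by
  have hpos : 0 < k * (k + 2) * (A ^ 2 - 1) := by
    have : 0 < A ^ 2 - 1 := by nlinarith
    positivity
  have hF0 : D' - (k + 1) * A + (C' - B') ≠ 0 := by
    intro h0
    rw [h0] at e'
    simp only [mul_zero] at e'
    linarith
  rw [hF, ← e'] at e
  have hE := mul_right_cancel₀ hF0 e
  have hD : D = D' := by linarith
  have hd : C - B = C' - B' := by linarith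
  subst hD
  have hs : (C + B) ^ 2 = (C' + B') ^ 2 := by
    have : (C - B) ^ 2 = (C' - B') ^ 2 := by rw [hd]
    linear_combination this + 4 * (hk - hk')
  have hs' : C + B = C' + B' := by
    rwa [sq_eq_sq₀ (by positivity) (by positivity)] at hs
  exact ⟨by linarith, by linarith, rfl⟩

/-- Data encoding a solution: `m = kA`, the divisor `A` of `m`, and a divisor `F` of
`k(k+2)(A²-1)` with `k = m / A`. -/
def codeSet (N : ℕ) : Finset (Σ _ : ℕ, Σ _ : ℕ, ℕ) :=
  (Finset.Icc 1 (3 * N)).sigma fun m => m.divisors.sigma fun A =>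
    (m / A * (m / A + 2) * (A ^ 2 - 1)).divisors

/-- `AD - BC` for `A = 2a+1`, …, `D = 2d+1`. -/
def kOf (x : ℕ × ℕ × ℕ × ℕ) : ℤ :=
  (2 * x.1 + 1) * (2 * x.2.2.2 + 1) - (2 * x.2.1 + 1) * (2 * x.2.2.1 + 1)

/-- `D - (k+1)A + (C-B)` for `A = 2a+1`, …, `D = 2d+1` and `k = AD - BC`. -/
def fOf (x : ℕ × ℕ × ℕ × ℕ) : ℤ :=
  (2 * x.2.2.2 + 1) - (kOf x + 1) * (2 * x.1 + 1) + ((2 * x.2.2.1 + 1) - (2 * x.2.1 + 1))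

lemma card_codeSet_le (N : ℕ) (hN : 8 ≤ N) (R : ℝ) (hR0 : 0 ≤ R)
    (hR : ∀ n : ℕ, n ≤ 27 * N ^ 2 → (n.divisors.card : ℝ) ≤ R) :
    ((codeSet N).card : ℝ) ≤ 3 * N * R ^ 2 := by
  have hin : ∀ m ∈ Finset.Icc 1 (3 * N), ∀ A ∈ m.divisors,
      ((m / A * (m / A + 2) * (A ^ 2 - 1)).divisors.card : ℝ) ≤ R := by
    intro m hm A hA
    rw [Finset.mem_Icc] at hm
    obtain ⟨k, rfl⟩ := (Nat.mem_divisors.mp hA).1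
    have hA0 : 0 < A := Nat.pos_of_mem_divisors hA
    rw [Nat.mul_div_cancel_left k hA0]
    apply hR
    have hk : 1 ≤ k := Nat.pos_of_ne_zero (by rintro rfl; simp at hm)
    calc k * (k + 2) * (A ^ 2 - 1) ≤ k * (3 * k) * A ^ 2 := by
          gcongr
          · omega
          · omega
      _ = 3 * (A * k) ^ 2 := by ring
      _ ≤ 3 * (3 * N) ^ 2 := Nat.mul_le_mul_left _ (Nat.pow_le_pow_left hm.2 2)
      _ = 27 * N ^ 2 := by ring
  rw [codeSet, Finset.card_sigma]
  push_cast
  calc _ ≤ ∑ m ∈ Finset.Icc 1 (3 * N), R ^ 2 := by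
        refine Finset.sum_le_sum fun m hm => ?_
        rw [Finset.card_sigma]
        push_cast
        calc _ ≤ ∑ A ∈ m.divisors, R := Finset.sum_le_sum fun A hA => hin m hm A hA
          _ = m.divisors.card * R := by simp
          _ ≤ R * R := by
              gcongr
              apply hR
              have := (Finset.mem_Icc.mp hm).2
              nlinarith
          _ = R ^ 2 := by ring
    _ = 3 * N * R ^ 2 := by simp

/-- `sol_key` for a quadruple of natural numbers. -/
lemma sol_key_nat (x : ℕ × ℕ × ℕ × ℕ) (h0 : 1 ≤ x.1) (h1 : x.1 < x.2.1) (h2 : x.2.1 ≤ x.2.2.1)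
    (h3 : x.2.2.1 < x.2.2.2)
    (h : x.1 * (x.1 + 1) * (x.2.2.2 * (x.2.2.2 + 1)) =
          x.2.1 * (x.2.1 + 1) * (x.2.2.1 * (x.2.2.1 + 1))) :
    0 < kOf x ∧ kOf x * (2 * x.1 + 1) < 2 * x.2.2.2 + 1 ∧
      ((2 * x.2.2.2 + 1) - (kOf x + 1) * (2 * x.1 + 1)
        - ((2 * x.2.2.1 + 1) - (2 * x.2.1 + 1))) * fOf x
        = kOf x * (kOf x + 2) * ((2 * x.1 + 1) ^ 2 - 1) ∧ 0 < fOf x := by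
  obtain ⟨a, b, c, d⟩ := x
  simp only at h0 h1 h2 h3 h
  refine sol_key (2 * a + 1) (2 * b + 1) (2 * c + 1) (2 * d + 1) _ (by omega) (by omega)
    (by omega) (by omega) ?_ rfl
  zify at h
  linear_combination 16 * h

lemma solTotalCount_le_card_codeSet (N : ℕ) :
    solTotalCount N ≤ (codeSet N).card := by
  rw [solTotalCount]
  refine Finset.card_le_card_of_injOn
    (fun x => ⟨(kOf x).toNat * (2 * x.1 + 1), 2 * x.1 + 1, (fOf x).toNat⟩) ?_ ?_
  · intro x hx
    simp only [Finset.coe_filter, Finset.mem_product, Finset.mem_Icc, Set.mem_ofPred_eq] at hx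
    obtain ⟨⟨ha, hb, hc, hd⟩, h1, h2, h3, h⟩ := hx
    obtain ⟨hk, hkA, e, hF⟩ := sol_key_nat x ha.1 h1 h2 h3 h
    simp only [codeSet, Finset.coe_sigma, Set.mem_sigma_iff, Finset.mem_coe, Finset.mem_Icc,
      Nat.mem_divisors]
    rw [Nat.mul_div_cancel _ (by omega)]
    obtain ⟨k, hk'⟩ := Int.eq_ofNat_of_zero_le hk.le
    obtain ⟨F, hF'⟩ := Int.eq_ofNat_of_zero_le hF.le
    rw [hk', hF'] at e
    rw [hk'] at hk hkA
    rw [hF'] at hF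
    rw [hk', hF', Int.toNat_natCast, Int.toNat_natCast]
    have hk0 : 0 < k := by exact_mod_cast hk
    have hkA' : k * (2 * x.1 + 1) < 2 * x.2.2.2 + 1 := by exact_mod_cast hkA
    have hm : 0 < k * (2 * x.1 + 1) := by positivity
    have hsq : 1 < (2 * x.1 + 1) ^ 2 := by nlinarith
    refine ⟨⟨hm, by omega⟩, ⟨Dvd.intro_left k rfl, hm.ne'⟩, ?_, ?_⟩
    · rw [← Int.natCast_dvd_natCast]
      push_cast [Nat.cast_sub hsq.le]
      exact Dvd.intro_left _ e
    · have : 0 < (2 * x.1 + 1) ^ 2 - 1 := by omega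
      positivity
  · intro x hx y hy hxy
    simp only [Finset.coe_filter, Finset.mem_product, Finset.mem_Icc, Set.mem_ofPred_eq] at hx hy
    obtain ⟨⟨ha, hb, hc, hd⟩, h1, h2, h3, h⟩ := hx
    obtain ⟨⟨ha', hb', hc', hd'⟩, h1', h2', h3', h'⟩ := hy
    obtain ⟨hk, -, e, hF⟩ := sol_key_nat x ha.1 h1 h2 h3 h
    obtain ⟨hk', -, e', hF'⟩ := sol_key_nat y ha'.1 h1' h2' h3' h'
    simp only [Sigma.mk.injEq, heq_eq_eq] at hxy
    obtain ⟨hm, hA, hf⟩ := hxy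
    rw [hA] at hm
    have hkk : kOf y = kOf x := by
      have := Nat.eq_of_mul_eq_mul_right (by omega) hm
      omega
    have hff : fOf x = fOf y := by omega
    have haa : y.1 = x.1 := by omega
    rw [hkk, haa] at e'
    have hky : kOf x = _ := hkk.symm.trans (kOf.eq_1 y)
    rw [haa] at hky
    rw [fOf] at e hff
    rw [fOf] at e' hff
    rw [hkk, haa] at e' hff
    have := sol_determined (2 * x.1 + 1) (kOf x) (2 * x.2.1 + 1) (2 * x.2.2.1 + 1)
      (2 * x.2.2.2 + 1) (2 * y.2.1 + 1) (2 * y.2.2.1 + 1) (2 * y.2.2.2 + 1) (by omega) hk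
      (by omega) (by omega) (by omega) (by omega) rfl hky e e' hff
    obtain ⟨a, b, c, d⟩ := x
    obtain ⟨a', b', c', d'⟩ := y
    simp only at this haa
    simp only [Prod.mk.injEq]
    omega

lemma solTotalCount_le (ε : ℝ) (hε : 0 < ε) :
    ∃ K : ℝ, 0 < K ∧ ∀ N : ℕ, 8 ≤ N →
      (solTotalCount N : ℝ) ≤ K * (N : ℝ) ^ ((3 : ℝ) / 2 + ε) := by
  obtain ⟨C, hC, hdiv⟩ := exists_card_divisors_le (ε / 4) (by positivity)
  refine ⟨3 * (C * 27 ^ (ε / 4)) ^ 2, by positivity, fun N hN => ?_⟩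
  have hN1 : (1 : ℝ) ≤ N := by exact_mod_cast (by omega : 1 ≤ N)
  have hN0 : (0 : ℝ) < N := by linarith
  have hcode := card_codeSet_le N hN (C * (27 * (N : ℝ) ^ 2) ^ (ε / 4)) (by positivity) (by
    intro n hn
    rcases eq_or_ne n 0 with rfl | hn0
    · simp only [Nat.divisors_zero, Finset.card_empty, Nat.cast_zero]
      positivity
    · refine (hdiv n hn0).trans ?_
      gcongr
      exact_mod_cast hn)
  calc (solTotalCount N : ℝ) ≤ (codeSet N).card := by
        exact_mod_cast solTotalCount_le_card_codeSet N
    _ ≤ _ := hcode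
    _ = 3 * (C * 27 ^ (ε / 4)) ^ 2 * (N : ℝ) ^ (1 + ε) := by
        have h2 : (((N : ℝ) ^ 2) ^ (ε / 4)) ^ 2 = (N : ℝ) ^ ε := by
          rw [← Real.rpow_natCast, ← Real.rpow_natCast, ← Real.rpow_mul hN0.le,
            ← Real.rpow_mul hN0.le]
          congr 1
          push_cast
          ring
        rw [Real.mul_rpow (by norm_num) (by positivity), Real.rpow_add hN0, Real.rpow_one, ← h2]
        ring
    _ ≤ _ := by
        refine mul_le_mul_of_nonneg_left ?_ (by positivity)
        exact Real.rpow_le_rpow_of_exponent_le hN1 (by linarith)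

lemma solCount_le (N : ℕ) : solCount N ≤ solTotalCount N := by
  refine Finset.card_le_card fun x hx => ?_
  simp only [Finset.mem_filter] at hx ⊢
  exact ⟨hx.1, hx.2.1, hx.2.2.1.le, hx.2.2.2⟩

lemma solEqCount_le (N : ℕ) : solEqCount N ≤ solTotalCount N := by
  refine Finset.card_le_card_of_injOn (fun x => (x.1, x.2.1, x.2.1, x.2.2)) ?_ ?_
  · intro x hx
    simp only [Finset.coe_filter, Finset.mem_product, Set.mem_ofPred_eq] at hx ⊢
    exact ⟨⟨hx.1.1, hx.1.2.1, hx.1.2.1, hx.1.2.2⟩, hx.2.1, le_rfl, hx.2.2⟩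
  · intro x _ y _ hxy
    simp only [Prod.mk.injEq] at hxy
    exact Prod.ext hxy.1 (Prod.ext hxy.2.1 hxy.2.2.2)

lemma one_le_solEqCount (N : ℕ) (hN : 8 ≤ N) : 1 ≤ solEqCount N := by
  refine Finset.card_pos.mpr ⟨(1, 3, 8), ?_⟩
  simp only [Finset.mem_filter, Finset.mem_product, Finset.mem_Icc]
  refine ⟨⟨?_, ?_, ?_⟩, ?_, ?_, ?_⟩ <;> try dsimp only
  all_goals omega

/-- The family `(t, 2t+1, 3t, 6t+2)` for `2 ≤ t ≤ (N-2)/6`, together with `(1, 2, 5, 9)`. -/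
lemma le_solCount (N : ℕ) (hN : 9 ≤ N) : (N - 2) / 6 ≤ solCount N := by
  have hcard : (N - 2) / 6 = (Finset.Icc 1 ((N - 2) / 6)).card := by simp
  rw [hcard]
  -- The value `t = 1` would give `b = c`; its place is taken by the sporadic solution.
  refine Finset.card_le_card_of_injOn
    (fun t => if t = 1 then (1, 2, 5, 9) else (t, 2 * t + 1, 3 * t, 6 * t + 2)) ?_ ?_
  · intro t ht
    simp only [Finset.coe_Icc, Set.mem_Icc] at ht
    simp only [Finset.coe_filter, Finset.mem_product, Finset.mem_Icc, Set.mem_ofPred_eq]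
    split_ifs with h
    · refine ⟨⟨?_, ?_, ?_, ?_⟩, ?_, ?_, ?_, ?_⟩ <;> dsimp only <;> omega
    · refine ⟨⟨?_, ?_, ?_, ?_⟩, ?_, ?_, ?_, by dsimp only; ring⟩ <;> dsimp only <;> omega
  · intro s _ t _ hst
    simp only at hst
    split_ifs at hst <;> simp_all

/-- For all `ε > 0` there is `C_ε > 0` with
`N/2 ≤ 8𝒩(N) + 4𝒩₌(N) ≤ C_ε N^(3/2+ε)` for all `N ≥ 8`; in particular, the total
number of quadruples `0 < a < b ≤ c < d ≤ N` solving `a(a+1)d(d+1) = b(b+1)c(c+1)` is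
`O_ε(N^(3/2+ε))`. -/
theorem statement11 (ε : ℝ) (hε : 0 < ε) :
    ∃ C : ℝ, 0 < C ∧ ∀ N : ℕ, 8 ≤ N →
      (N : ℝ) / 2 ≤ 8 * (solCount N : ℝ) + 4 * (solEqCount N : ℝ) ∧
        8 * (solCount N : ℝ) + 4 * (solEqCount N : ℝ) ≤ C * (N : ℝ) ^ ((3 : ℝ) / 2 + ε) ∧
        (solTotalCount N : ℝ) ≤ C * (N : ℝ) ^ ((3 : ℝ) / 2 + ε) := by
  obtain ⟨K, hK, hle⟩ := solTotalCount_le ε hε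
  refine ⟨12 * K, by positivity, fun N hN => ⟨?_, ?_, ?_⟩⟩
  · have h1 : (1 : ℝ) ≤ solEqCount N := by exact_mod_cast one_le_solEqCount N hN
    rcases Nat.eq_or_lt_of_le hN with h8 | hN9
    · have h0 : (0 : ℝ) ≤ solCount N := Nat.cast_nonneg _
      have h8' : (N : ℝ) = 8 := by exact_mod_cast h8.symm
      linarith
    · have h2 : N ≤ 16 * solCount N + 8 := by
        have := le_solCount N hN9
        omega
      have h3 : (N : ℝ) ≤ 16 * solCount N + 8 := by exact_mod_cast h2
      linarith
  · have h1 : (solCount N : ℝ) ≤ solTotalCount N := by exact_mod_cast solCount_le N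
    have h2 : (solEqCount N : ℝ) ≤ solTotalCount N := by exact_mod_cast solEqCount_le N
    have h3 := hle N hN
    rw [mul_assoc]
    linarith
  · have h3 := hle N hN
    have h0 : (0 : ℝ) ≤ solTotalCount N := by positivity
    rw [mul_assoc]
    linarith
end

section
/- Every quadruple of integers (a, b, c, d) with 0 < a < b ≤ c < d satisfying a(a+1)d(d+1) = b(b+1)c(c+1) satisfies d/a > 3 + 2√2. Moreover this bound is sharp: for every k ≥ 1, setting u_r = ((1+√2)^r + (1−√2)^r − 2)/4, the quadruple (u_{2k}, u_{2k+1}, u_{2k+1}, u_{2k+2}) is a solution, and u_{2k+2}/u_{2k} → 3 + 2√2. -/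
/-!
The bound rests on the identity `P² - (d - a)² = 4 a(a+1)d(d+1)` with `P = 2ad + a + d`, and
likewise for `Q = 2bc + b + c`. The equation therefore says `P² - Q² = (d - a)² - (c - b)²`, which
is positive because `[b, c]` lies strictly inside `[a, d]`. So `P ≥ Q + 1` by integrality, whence
`(d - a)² ≥ P² - Q² ≥ 2P - 1 = 4ad + 2a + 2d - 1`. Thus `d² - 6ad + a² > 0` with `d > a`, i.e. `d/a`
exceeds the larger root `3 + 2√2` of `t² - 6t + 1`.

For sharpness, `u` obeys `u (r+2) = 2 u (r+1) + u r + 1`, so its values are natural numbers, and the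
invariant `u (2k) * (u (2k+2) + 1) = u (2k+1) ^ 2` (equivalently
`(u (2k) + 1) * u (2k+2) = (u (2k+1) + 1) ^ 2`) gives the equation. With `y = (3 - 2√2)^k → 0` the
ratio `u (2k+2) / u (2k)` is `(3 + 2√2 + (3 - 2√2) y² - 2y) / (1 + y² - 2y)`.
-/

open Filter

/-- `u r = ((1+√2)^r + (1-√2)^r - 2) / 4`. -/
noncomputable def uSeq (r : ℕ) : ℝ :=
  ((1 + Real.sqrt 2) ^ r + (1 - Real.sqrt 2) ^ r - 2) / 4

theorem four_mul_lt_sq_sub {a b c d : ℤ} (ha : 0 < a) (hab : a < b) (hbc : b ≤ c) (hcd : c < d)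
    (h : a * (a + 1) * (d * (d + 1)) = b * (b + 1) * (c * (c + 1))) :
    4 * a * d < (d - a) ^ 2 := by
  have key : (2 * a * d + a + d) ^ 2 - (2 * b * c + b + c) ^ 2 = (d - a) ^ 2 - (c - b) ^ 2 := by
    linear_combination 4 * h
  have hlt : (c - b) ^ 2 < (d - a) ^ 2 := by
    apply pow_lt_pow_left₀ <;> lia
  have hQ : 0 < 2 * b * c + b + c := by
    have : 0 < b * c := mul_pos (by lia) (by lia)
    linarith
  have hP : 0 < a * d := mul_pos ha (by lia)
  have hPQ : 2 * b * c + b + c < 2 * a * d + a + d := by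
    apply lt_of_pow_lt_pow_left₀ 2 (by linarith)
    linarith
  have hle : (2 * b * c + b + c) ^ 2 ≤ (2 * a * d + a + d - 1) ^ 2 :=
    pow_le_pow_left₀ hQ.le (by lia) 2
  nlinarith [sq_nonneg (c - b)]

theorem lt_div_of_four_mul_lt_sq {a d : ℝ} (ha : 0 < a) (had : a < d)
    (h : 4 * a * d < (d - a) ^ 2) : 3 + 2 * Real.sqrt 2 < d / a := by
  have h2 : Real.sqrt 2 ^ 2 = 2 := Real.sq_sqrt (by norm_num)
  have h0 : 0 < Real.sqrt 2 := by positivity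
  rw [lt_div_iff₀ ha]
  by_contra! hle
  -- `((3 + 2√2) a - d) (d - (3 - 2√2) a) = 4 a d - (d - a)²`, where the second factor is positive.
  have h3 : 3 - 2 * Real.sqrt 2 < 1 := by nlinarith
  have h4 : 0 < d - (3 - 2 * Real.sqrt 2) * a := by nlinarith
  have h5 := mul_nonneg (sub_nonneg.2 hle) h4.le
  have h6 : ((3 + 2 * Real.sqrt 2) * a - d) * (d - (3 - 2 * Real.sqrt 2) * a) =
      4 * a * d - (d - a) ^ 2 := by
    linear_combination 4 * a ^ 2 * h2
  linarith

theorem uSeq_add_two (r : ℕ) : uSeq (r + 2) = 2 * uSeq (r + 1) + uSeq r + 1 := by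
  have h2 : Real.sqrt 2 ^ 2 = 2 := Real.sq_sqrt (by norm_num)
  simp only [uSeq, pow_succ]
  linear_combination ((1 + Real.sqrt 2) ^ r + (1 - Real.sqrt 2) ^ r) / 4 * h2

/-- The third conjunct is `u (2k) * (u (2k+2) + 1) = u (2k+1) ^ 2`, with `u (2k+2)` eliminated by
the recurrence. -/
theorem exists_nat_uSeq (k : ℕ) : ∃ a b : ℕ, (a : ℝ) = uSeq (2 * k) ∧
    (b : ℝ) = uSeq (2 * k + 1) ∧ a * (2 * b + a + 2) = b ^ 2 ∧ (1 ≤ k → 0 < a ∧ a < b) := by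
  induction k with
  | zero => exact ⟨0, 0, by norm_num [uSeq], by norm_num [uSeq], by norm_num, by norm_num⟩
  | succ k ih =>
    obtain ⟨a, b, ha, hb, h, -⟩ := ih
    have hd : ((2 * b + a + 1 : ℕ) : ℝ) = uSeq (2 * k + 2) := by
      push_cast
      rw [uSeq_add_two, ha, hb]
    refine ⟨2 * b + a + 1, 2 * (2 * b + a + 1) + b + 1, hd, ?_, ?_, fun _ => by lia⟩
    · rw [show 2 * (k + 1) + 1 = (2 * k + 1) + 2 by ring, uSeq_add_two, ← hb,
        show 2 * k + 1 + 1 = 2 * k + 2 by ring, ← hd]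
      push_cast
      ring
    · zify at h ⊢
      linear_combination h

theorem uSeq_ratio (k : ℕ) : uSeq (2 * k + 2) / uSeq (2 * k) =
    (3 + 2 * Real.sqrt 2 + (3 - 2 * Real.sqrt 2) * ((3 - 2 * Real.sqrt 2) ^ k) ^ 2
      - 2 * (3 - 2 * Real.sqrt 2) ^ k) /
    (1 + ((3 - 2 * Real.sqrt 2) ^ k) ^ 2 - 2 * (3 - 2 * Real.sqrt 2) ^ k) := by
  have h2 : Real.sqrt 2 ^ 2 = 2 := Real.sq_sqrt (by norm_num)
  have hp : (1 + Real.sqrt 2) ^ 2 = 3 + 2 * Real.sqrt 2 := by linear_combination h2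
  have hm : (1 - Real.sqrt 2) ^ 2 = 3 - 2 * Real.sqrt 2 := by linear_combination h2
  have hmul : (3 + 2 * Real.sqrt 2) * (3 - 2 * Real.sqrt 2) = 1 := by linear_combination -4 * h2
  have hxy : (3 + 2 * Real.sqrt 2) ^ k * (3 - 2 * Real.sqrt 2) ^ k = 1 := by
    rw [← mul_pow, hmul, one_pow]
  have hy : (3 - 2 * Real.sqrt 2) ^ k ≠ 0 := right_ne_zero_of_mul_eq_one hxy
  simp only [uSeq, pow_add, pow_mul, hp, hm]
  generalize (3 + 2 * Real.sqrt 2) ^ k = x at *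
  generalize (3 - 2 * Real.sqrt 2) ^ k = y at *
  rw [← mul_div_mul_right _ _ (mul_ne_zero (four_ne_zero' ℝ) hy)]
  congr 1
  · linear_combination (3 + 2 * Real.sqrt 2) * hxy
  · linear_combination hxy

theorem tendsto_uSeq_ratio : Tendsto (fun k : ℕ => uSeq (2 * k + 2) / uSeq (2 * k)) atTop
    (nhds (3 + 2 * Real.sqrt 2)) := by
  have h2 : Real.sqrt 2 ^ 2 = 2 := Real.sq_sqrt (by norm_num)
  have h0 : 0 < Real.sqrt 2 := by positivity
  have hy : Tendsto (fun k : ℕ => (3 - 2 * Real.sqrt 2) ^ k) atTop (nhds 0) := by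
    apply tendsto_pow_atTop_nhds_zero_of_lt_one <;> nlinarith
  have hc : ContinuousAt (fun y : ℝ => (3 + 2 * Real.sqrt 2 + (3 - 2 * Real.sqrt 2) * y ^ 2
      - 2 * y) / (1 + y ^ 2 - 2 * y)) 0 := by
    apply ContinuousAt.div (by fun_prop) (by fun_prop)
    norm_num
  have h := hc.tendsto.comp hy
  simp only [uSeq_ratio]
  simpa [Function.comp_def] using h

/-- Every quadruple of integers `0 < a < b ≤ c < d` with `a(a+1)d(d+1) = b(b+1)c(c+1)`
satisfies `d/a > 3 + 2√2`; the bound is sharp: for every `k ≥ 1` the quadruple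
`(u_{2k}, u_{2k+1}, u_{2k+1}, u_{2k+2})` is a solution, and `u_{2k+2}/u_{2k} → 3 + 2√2`. -/
theorem statement12 :
    (∀ a b c d : ℕ, 0 < a → a < b → b ≤ c → c < d →
        a * (a + 1) * (d * (d + 1)) = b * (b + 1) * (c * (c + 1)) →
        3 + 2 * Real.sqrt 2 < (d : ℝ) / (a : ℝ)) ∧
      (∀ k : ℕ, 1 ≤ k → ∃ a b d : ℕ,
        (a : ℝ) = uSeq (2 * k) ∧ (b : ℝ) = uSeq (2 * k + 1) ∧ (d : ℝ) = uSeq (2 * k + 2) ∧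
        0 < a ∧ a < b ∧ b < d ∧
        a * (a + 1) * (d * (d + 1)) = b * (b + 1) * (b * (b + 1))) ∧
      Tendsto (fun k : ℕ => uSeq (2 * k + 2) / uSeq (2 * k)) atTop
        (nhds (3 + 2 * Real.sqrt 2)) := by
  refine ⟨fun a b c d ha hab hbc hcd h => ?_, fun k hk => ?_, tendsto_uSeq_ratio⟩
  · have h1 : (4 * a * d : ℤ) < ((d : ℤ) - a) ^ 2 :=
      four_mul_lt_sq_sub (b := b) (c := c) (by lia) (by lia) (by lia) (by lia)
        (by exact_mod_cast h)
    exact lt_div_of_four_mul_lt_sq (by exact_mod_cast ha)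
      (by exact_mod_cast hab.trans_le hbc |>.trans hcd) (by exact_mod_cast h1)
  · obtain ⟨a, b, ha, hb, h, hpos⟩ := exists_nat_uSeq k
    obtain ⟨ha0, hab⟩ := hpos hk
    refine ⟨a, b, 2 * b + a + 1, ha, hb, ?_, ha0, hab, by lia, ?_⟩
    · push_cast
      rw [uSeq_add_two, ha, hb]
    -- The factors `a (d + 1)` and `(a + 1) d` equal `b²` and `(b + 1)²` respectively.
    · have h' : (a + 1) * (2 * b + a + 1) = (b + 1) ^ 2 := by
        zify at h ⊢
        linear_combination h
      calc a * (a + 1) * ((2 * b + a + 1) * (2 * b + a + 1 + 1))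
          = (a * (2 * b + a + 2)) * ((a + 1) * (2 * b + a + 1)) := by ring
        _ = b * (b + 1) * (b * (b + 1)) := by rw [h, h']; ring
end

section
/- For every ε > 0 there exists a constant C_ε > 0 such that for every positive integer P and every positive integer M, the number of pairs (x, y) ∈ ℤ² with x² + P y² = M is at most C_ε M^ε; that is, the number of representations of M by the quadratic form X² + P Y² is O(M^ε) uniformly in P. -/
/-!
The number of representations is at most `25 * d(M)²`, where `d` is the divisor function, and
`d(M) ≪ M^δ` for every `δ > 0`. The first bound is elementary and does not involve `P`.

* If `n² ∣ P` and `n² ∣ M`, then `n ∣ x` for every representation `(x, y)`, so the representations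
  of `M` by `X² + P Y²` correspond to those of `M / n²` by `X² + (P / n²) Y²`. Hence one may assume
  that `P` and `M` have no common square factor (`card_le_of_rep`).
* Grouping representations by `e = gcd (x, y)`, a divisor of `M`, reduces to coprime pairs
  representing `M / e²`, at the cost of a factor `d(M)` (`card_le_of_noCommonSquare`).
* Fix one coprime representation `(x₀, y₀)` and group the others by `d = gcd (x y₀ - x₀ y, M)`.
  Since `M` divides `(x y₀ - x₀ y) (x y₀ + x₀ y)`, the number `M / d` divides `x y₀ + x₀ y`.
  As `y₀` is prime to `M`, two representations in the same group satisfy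
  `lcm (d, M / d) ∣ x y' - x' y`. The absence of common square factors forces
  `gcd (d, M / d) ∣ 2`, so `M ∣ 2 (x y' - x' y)`, and then also `M ∣ 2 (x x' + P y y')`
  (`card_le_of_coprime`).
* By Brahmagupta's identity the quotients `A = 2 (x x' + P y y') / M` and
  `B = 2 (x y' - x' y) / M` satisfy `A² + P B² = 4`, which has at most `25` solutions; for fixed
  `(x, y)` they determine `(x', y')` (`card_le_of_pairwise`).
-/

/-- A set of representations of `M` that are congruent to one another up to the factor `2` has
at most `25` elements: composing with a fixed one gives solutions of `A² + P B² = 4`. -/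
lemma card_le_of_pairwise (P M : ℤ) (hP : 0 < P) (hM : 0 < M) (T : Finset (ℤ × ℤ))
    (hT : ∀ q ∈ T, q.1 ^ 2 + P * q.2 ^ 2 = M)
    (h1 : ∀ q ∈ T, ∀ r ∈ T, M ∣ 2 * (q.1 * r.2 - r.1 * q.2))
    (h2 : ∀ q ∈ T, ∀ r ∈ T, M ∣ 2 * (q.1 * r.1 + P * (q.2 * r.2))) :
    T.card ≤ 25 := by
  rcases T.eq_empty_or_nonempty with rfl | ⟨q, hq⟩
  · simp
  have key : T.card ≤ (Finset.Icc (-2 : ℤ) 2 ×ˢ Finset.Icc (-2 : ℤ) 2).card := by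
    apply Finset.card_le_card_of_injOn
      (fun r => (2 * (q.1 * r.1 + P * (q.2 * r.2)) / M, 2 * (q.1 * r.2 - r.1 * q.2) / M))
    · intro r hr
      obtain ⟨B, hB⟩ := h1 q hq r hr
      obtain ⟨A, hA⟩ := h2 q hq r hr
      have e : M ^ 2 * (A ^ 2 + P * B ^ 2) = M ^ 2 * 4 := by
        have : (M * A) ^ 2 + P * (M * B) ^ 2
            = 4 * ((q.1 ^ 2 + P * q.2 ^ 2) * (r.1 ^ 2 + P * r.2 ^ 2)) := by
          rw [← hA, ← hB]; ring
        rw [hT q hq, hT r hr] at this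
        linear_combination this
      have e' : A ^ 2 + P * B ^ 2 = 4 := mul_left_cancel₀ (by positivity) e
      have hB2 : B ^ 2 ≤ 4 := by nlinarith [sq_nonneg A, sq_nonneg B]
      have hA2 : A ^ 2 ≤ 4 := by nlinarith [mul_nonneg hP.le (sq_nonneg B)]
      simp only [hA, hB, Int.mul_ediv_cancel_left _ hM.ne', Finset.coe_product, Set.mem_prod,
        Finset.coe_Icc, Set.mem_Icc]
      refine ⟨⟨?_, ?_⟩, ?_, ?_⟩ <;> nlinarith
    · intro r hr s hs hrs
      simp only [Prod.mk.injEq] at hrs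
      obtain ⟨hA, hB⟩ := hrs
      rw [Int.ediv_left_inj (h2 q hq r hr) (h2 q hq s hs)] at hA
      rw [Int.ediv_left_inj (h1 q hq r hr) (h1 q hq s hs)] at hB
      have e := hT q hq
      have e1 : (2 * M) * r.1 = (2 * M) * s.1 := by
        rw [← e]; linear_combination q.1 * hA - P * q.2 * hB
      have e2 : (2 * M) * r.2 = (2 * M) * s.2 := by
        rw [← e]; linear_combination q.2 * hA + q.1 * hB
      exact Prod.ext (mul_left_cancel₀ (by positivity) e1) (mul_left_cancel₀ (by positivity) e2)
  simpa using key

/-- `P` and `M` have no common square factor other than `1`. -/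
def NoCommonSquare (P M : ℕ) : Prop := ∀ n : ℕ, n ^ 2 ∣ P → n ^ 2 ∣ M → n = 1

lemma NoCommonSquare.dvd_two {P M : ℕ} (h : NoCommonSquare P M) {g : ℕ}
    (hP : g ^ 2 ∣ 4 * P) (hM : g ^ 2 ∣ M) : g ∣ 2 := by
  rcases Nat.even_or_odd g with he | ho
  · obtain ⟨k, rfl⟩ := he.two_dvd
    have : k = 1 := by
      apply h
      · rw [mul_pow] at hP
        exact Nat.dvd_of_mul_dvd_mul_left (by norm_num) hP
      · exact (pow_dvd_pow_of_dvd (Dvd.intro_left 2 rfl) 2).trans hM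
    simp [this]
  · have hc : Nat.Coprime (g ^ 2) 4 := by
      have : Nat.Coprime (g ^ 2) (2 ^ 2) := (Nat.coprime_two_right.mpr ho).pow 2 2
      simpa using this
    rw [h g (hc.dvd_of_dvd_mul_left hP) hM]
    norm_num

lemma isCoprime_right_of_rep {P M x y : ℤ} (h : x ^ 2 + P * y ^ 2 = M) (hc : IsCoprime x y) :
    IsCoprime M y := by
  have h1 : IsCoprime (x ^ 2 + y * (P * y)) y := (hc.pow_left (m := 2)).add_mul_left_left _
  rwa [show x ^ 2 + y * (P * y) = M by rw [← h]; ring] at h1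

/-- Two coprime representations `(x, y)`, `(z, w)` such that the ratios `x / y` and `z / w` both
agree with `x₀ / y₀` modulo `d` and with `-x₀ / y₀` modulo `k`, where `d * k = M`, have ratios that
agree modulo `M` up to a factor `2`. -/
lemma dvd_two_mul_cross {P M : ℕ} (h : NoCommonSquare P M) {x₀ y₀ x y z w : ℤ}
    (hc₀ : IsCoprime (M : ℤ) y₀) (hr : x ^ 2 + P * y ^ 2 = M) (hc : IsCoprime (M : ℤ) y)
    {d k : ℕ} (hM : M = d * k)
    (hd : (d : ℤ) ∣ x * y₀ - x₀ * y) (hd' : (d : ℤ) ∣ z * y₀ - x₀ * w)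
    (hk : (k : ℤ) ∣ x * y₀ + x₀ * y) (hk' : (k : ℤ) ∣ z * y₀ + x₀ * w) :
    (M : ℤ) ∣ 2 * (x * w - z * y) := by
  have hdM : (d : ℤ) ∣ M := ⟨k, by rw [hM]; push_cast; ring⟩
  have hkM : (k : ℤ) ∣ M := ⟨d, by rw [hM]; push_cast; ring⟩
  have hgd : ((Nat.gcd d k : ℕ) : ℤ) ∣ d := Int.natCast_dvd_natCast.mpr (Nat.gcd_dvd_left d k)
  have hgk : ((Nat.gcd d k : ℕ) : ℤ) ∣ k := Int.natCast_dvd_natCast.mpr (Nat.gcd_dvd_right d k)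
  have a1 : (d : ℤ) ∣ x * w - z * y := by
    apply (IsCoprime.of_isCoprime_of_dvd_left hc₀ hdM).dvd_of_dvd_mul_left
    have := dvd_sub (hd.mul_left w) (hd'.mul_left y)
    convert this using 1; ring
  have a2 : (k : ℤ) ∣ x * w - z * y := by
    apply (IsCoprime.of_isCoprime_of_dvd_left hc₀ hkM).dvd_of_dvd_mul_left
    have := dvd_sub (hk.mul_left w) (hk'.mul_left y)
    convert this using 1; ring
  have hlcm : ((Nat.lcm d k : ℕ) : ℤ) ∣ x * w - z * y := by
    rw [Int.natCast_dvd] at a1 a2 ⊢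
    exact Nat.lcm_dvd a1 a2
  have hg2M : (Nat.gcd d k) ^ 2 ∣ M := by
    rw [hM, sq]; exact mul_dvd_mul (Nat.gcd_dvd_left d k) (Nat.gcd_dvd_right d k)
  have hg2x : ((Nat.gcd d k : ℕ) : ℤ) ∣ 2 * x := by
    apply (IsCoprime.of_isCoprime_of_dvd_left hc₀ (hgd.trans hdM)).dvd_of_dvd_mul_left
    have := dvd_add (hgd.trans hd) (hgk.trans hk)
    convert this using 1; ring
  have hg2M' : ((Nat.gcd d k : ℕ) : ℤ) ^ 2 ∣ M := by exact_mod_cast hg2M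
  have hg4P : (Nat.gcd d k) ^ 2 ∣ 4 * P := by
    have : ((Nat.gcd d k : ℕ) : ℤ) ^ 2 ∣ 4 * P := by
      apply ((IsCoprime.of_isCoprime_of_dvd_left hc hg2M').pow_right (n := 2)).dvd_of_dvd_mul_left
      have := dvd_sub (hg2M'.mul_left 4) (pow_dvd_pow_of_dvd hg2x 2)
      convert this using 1; rw [← hr]; ring
    exact_mod_cast this
  have hg : ((Nat.gcd d k : ℕ) : ℤ) ∣ 2 := by exact_mod_cast h.dvd_two hg4P hg2M
  have := mul_dvd_mul hg hlcm
  rwa [← Nat.cast_mul, Nat.gcd_mul_lcm, ← hM] at this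

lemma card_le_of_coprime {P M : ℕ} (hP : 0 < P) (hM : 0 < M) (h : NoCommonSquare P M)
    (T : Finset (ℤ × ℤ)) (hT : ∀ q ∈ T, q.1 ^ 2 + (P : ℤ) * q.2 ^ 2 = M)
    (hc : ∀ q ∈ T, IsCoprime q.1 q.2) : T.card ≤ 25 * M.divisors.card := by
  rcases T.eq_empty_or_nonempty with rfl | ⟨q, hq⟩
  · simp
  have hcy : ∀ r ∈ T, IsCoprime (M : ℤ) r.2 := fun r hr =>
    isCoprime_right_of_rep (hT r hr) (hc r hr)
  apply Finset.card_le_mul_card_image_of_maps_to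
    (f := fun r : ℤ × ℤ => Int.gcd (r.1 * q.2 - q.1 * r.2) M)
  · intro r hr
    rw [Nat.mem_divisors]
    exact ⟨by exact_mod_cast Int.gcd_dvd_right (r.1 * q.2 - q.1 * r.2) (M : ℤ), hM.ne'⟩
  · intro d hd
    obtain ⟨k, hk⟩ := (Nat.mem_divisors.mp hd).1
    have hd0 : (d : ℤ) ≠ 0 := by rintro hd0; simp_all
    have hfib : ∀ r ∈ T, Int.gcd (r.1 * q.2 - q.1 * r.2) M = d →
        (d : ℤ) ∣ r.1 * q.2 - q.1 * r.2 ∧ (k : ℤ) ∣ r.1 * q.2 + q.1 * r.2 := by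
      intro r hr hrd
      have h1 : (d : ℤ) ∣ r.1 * q.2 - q.1 * r.2 := hrd ▸ Int.gcd_dvd_left _ _
      refine ⟨h1, ?_⟩
      obtain ⟨u, hu⟩ := h1
      have hMk : (M : ℤ) = d * k := by exact_mod_cast hk
      have huk : Int.gcd u k = 1 := by
        rw [hu, hMk, Int.gcd_mul_left, Int.natAbs_natCast] at hrd
        exact Nat.eq_of_mul_eq_mul_left (by omega : 0 < d) (by simpa using hrd)
      have hkcop : IsCoprime (k : ℤ) u := (Int.isCoprime_iff_gcd_eq_one.mpr huk).symm
      apply hkcop.dvd_of_dvd_mul_left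
      -- `(x y₀ - x₀ y) (x y₀ + x₀ y) = M (y₀² - y²)`, divided by `d`
      refine ⟨q.2 ^ 2 - r.2 ^ 2, mul_left_cancel₀ hd0 ?_⟩
      have e1 := hT r hr
      have e2 := hT q hq
      linear_combination -(r.1 * q.2 + q.1 * r.2) * hu + q.2 ^ 2 * e1 - r.2 ^ 2 * e2
        + (q.2 ^ 2 - r.2 ^ 2) * hMk
    have cross : ∀ r ∈ T.filter (fun r => Int.gcd (r.1 * q.2 - q.1 * r.2) M = d),
        ∀ s ∈ T.filter (fun r => Int.gcd (r.1 * q.2 - q.1 * r.2) M = d),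
        (M : ℤ) ∣ 2 * (r.1 * s.2 - s.1 * r.2) := by
      intro r hr s hs
      rw [Finset.mem_filter] at hr hs
      have h1 := hfib r hr.1 hr.2
      have h2 := hfib s hs.1 hs.2
      exact dvd_two_mul_cross h (hcy q hq) (hT r hr.1) (hcy r hr.1) hk h1.1 h2.1 h1.2 h2.2
    apply card_le_of_pairwise P M (by exact_mod_cast hP) (by exact_mod_cast hM)
    · intro r hr
      exact hT r (Finset.mem_filter.mp hr).1
    · exact cross
    · intro r hr s hs
      have hrT := (Finset.mem_filter.mp hr).1
      apply (hcy r hrT).dvd_of_dvd_mul_left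
      have := dvd_sub (Dvd.intro (2 * s.2) rfl : (M : ℤ) ∣ M * (2 * s.2))
        ((cross r hr s hs).mul_left r.1)
      convert this using 1
      linear_combination (2 * s.2) * hT r hrT

lemma card_divisors_le_of_dvd {m n : ℕ} (hn : n ≠ 0) (h : m ∣ n) :
    m.divisors.card ≤ n.divisors.card :=
  Finset.card_le_card (Nat.divisors_subset_of_dvd hn h)

lemma card_le_of_noCommonSquare {P M : ℕ} (hP : 0 < P) (hM : 0 < M) (h : NoCommonSquare P M)
    (T : Finset (ℤ × ℤ)) (hT : ∀ q ∈ T, q.1 ^ 2 + (P : ℤ) * q.2 ^ 2 = M) :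
    T.card ≤ 25 * M.divisors.card ^ 2 := by
  have hsq : ∀ q ∈ T, (Int.gcd q.1 q.2) ^ 2 ∣ M := by
    intro q hq
    have h1 := pow_dvd_pow_of_dvd (Int.gcd_dvd_left q.1 q.2) 2
    have h2 := pow_dvd_pow_of_dvd (Int.gcd_dvd_right q.1 q.2) 2
    have := dvd_add h1 (h2.mul_left (P : ℤ))
    rw [hT q hq] at this
    exact_mod_cast this
  rw [sq, ← mul_assoc]
  apply Finset.card_le_mul_card_image_of_maps_to (f := fun q : ℤ × ℤ => Int.gcd q.1 q.2)
  · intro q hq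
    exact Nat.mem_divisors.mpr ⟨(dvd_pow_self _ two_ne_zero).trans (hsq q hq), hM.ne'⟩
  · intro e he
    by_cases hne : (T.filter (fun q => Int.gcd q.1 q.2 = e)).Nonempty
    swap
    · rw [Finset.not_nonempty_iff_eq_empty.mp hne]; simp
    obtain ⟨q, hq⟩ := hne
    rw [Finset.mem_filter] at hq
    obtain ⟨m, hm⟩ := hq.2 ▸ hsq q hq.1
    have he0 : (e : ℤ) ≠ 0 := by
      have := Nat.pos_of_mem_divisors he
      positivity
    have hm0 : 0 < m := Nat.pos_of_ne_zero (by rintro rfl; simp at hm; omega)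
    have hmM : m ∣ M := ⟨e ^ 2, by rw [hm]; ring⟩
    have hfib : ∀ r ∈ T.filter (fun q => Int.gcd q.1 q.2 = e),
        ∃ x y : ℤ, r = (e * x, e * y) ∧ IsCoprime x y := by
      intro r hr
      have hg := (Finset.mem_filter.mp hr).2
      obtain ⟨x, hx⟩ : (e : ℤ) ∣ r.1 := hg ▸ Int.gcd_dvd_left _ _
      obtain ⟨y, hy⟩ : (e : ℤ) ∣ r.2 := hg ▸ Int.gcd_dvd_right _ _
      refine ⟨x, y, Prod.ext hx hy, ?_⟩
      rw [hx, hy, Int.gcd_mul_left, Int.natAbs_natCast] at hg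
      exact Int.isCoprime_iff_gcd_eq_one.mpr
        (Nat.eq_of_mul_eq_mul_left (by omega : 0 < e) (by simpa using hg))
    have hinj : Set.InjOn (fun r : ℤ × ℤ => (r.1 / (e : ℤ), r.2 / (e : ℤ)))
        (T.filter (fun q => Int.gcd q.1 q.2 = e) : Finset (ℤ × ℤ)) := by
      intro r hr s hs hrs
      obtain ⟨x, y, rfl, -⟩ := hfib r hr
      obtain ⟨z, w, rfl, -⟩ := hfib s hs
      simp only [Int.mul_ediv_cancel_left _ he0, Prod.mk.injEq] at hrs
      rw [hrs.1, hrs.2]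
    rw [← Finset.card_image_of_injOn hinj]
    refine (card_le_of_coprime (M := m) hP hm0 (fun n h1 h2 => h n h1 (h2.trans hmM)) _ ?_ ?_).trans
      (Nat.mul_le_mul_left _ (card_divisors_le_of_dvd hM.ne' hmM))
    · intro s hs
      obtain ⟨r, hr, rfl⟩ := Finset.mem_image.mp hs
      have hrep := hT r (Finset.mem_filter.mp hr).1
      obtain ⟨x, y, rfl, -⟩ := hfib r hr
      simp only [Int.mul_ediv_cancel_left _ he0]
      rw [hm] at hrep
      push_cast at hrep
      apply mul_left_cancel₀ (pow_ne_zero 2 he0)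
      linear_combination hrep
    · intro s hs
      obtain ⟨r, hr, rfl⟩ := Finset.mem_image.mp hs
      obtain ⟨x, y, rfl, hxy⟩ := hfib r hr
      simpa only [Int.mul_ediv_cancel_left _ he0] using hxy

lemma card_le_of_rep (M : ℕ) : ∀ P : ℕ, 0 < P → 0 < M → ∀ T : Finset (ℤ × ℤ),
    (∀ q ∈ T, q.1 ^ 2 + (P : ℤ) * q.2 ^ 2 = M) → T.card ≤ 25 * M.divisors.card ^ 2 := by
  induction M using Nat.strong_induction_on with
  | _ M ih =>
  intro P hP hM T hT
  by_cases h : NoCommonSquare P M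
  · exact card_le_of_noCommonSquare hP hM h T hT
  unfold NoCommonSquare at h
  push Not at h
  obtain ⟨n, ⟨Q, hQ⟩, ⟨m, hm⟩, hn1⟩ := h
  have hn0 : n ≠ 0 := by rintro rfl; simp at hm; omega
  have hn0' : (n : ℤ) ≠ 0 := by exact_mod_cast hn0
  have hm0 : 0 < m := Nat.pos_of_ne_zero (by rintro rfl; simp at hm; omega)
  have hQ0 : 0 < Q := Nat.pos_of_ne_zero (by rintro rfl; simp at hQ; omega)
  have hlt : m < M := by
    have : 2 ≤ n := by omega
    have h4 : 1 < n ^ 2 := Nat.one_lt_pow two_ne_zero this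
    rw [hm]; nlinarith
  have hx : ∀ q ∈ T, ∃ x : ℤ, q.1 = n * x := by
    intro q hq
    have : (n : ℤ) ^ 2 ∣ q.1 ^ 2 := by
      refine ⟨m - Q * q.2 ^ 2, ?_⟩
      have := hT q hq
      rw [hm, hQ] at this
      push_cast at this
      linear_combination this
    exact (Int.pow_dvd_pow_iff two_ne_zero).mp this
  have hinj : Set.InjOn (fun r : ℤ × ℤ => (r.1 / (n : ℤ), r.2)) T := by
    intro r hr s hs hrs
    obtain ⟨x, hx1⟩ := hx r hr
    obtain ⟨z, hz⟩ := hx s hs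
    simp only [hx1, hz, Int.mul_ediv_cancel_left _ hn0', Prod.mk.injEq] at hrs
    exact Prod.ext (by rw [hx1, hz, hrs.1]) hrs.2
  rw [← Finset.card_image_of_injOn hinj]
  refine (ih m hlt Q hQ0 hm0 _ ?_).trans (Nat.mul_le_mul_left _ (Nat.pow_le_pow_left
    (card_divisors_le_of_dvd hM.ne' ⟨n ^ 2, by rw [hm]; ring⟩) 2))
  intro s hs
  obtain ⟨r, hr, rfl⟩ := Finset.mem_image.mp hs
  obtain ⟨x, hx1⟩ := hx r hr
  have hrep := hT r hr
  simp only [hx1, Int.mul_ediv_cancel_left _ hn0']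
  rw [hx1, hm, hQ] at hrep
  push_cast at hrep
  apply mul_left_cancel₀ (pow_ne_zero 2 hn0')
  linear_combination hrep

/-- The divisor bound `d(n) ≪ n^δ`. In the Euler product of `d(n) / n^δ`, the factor of a prime
`p ≥ 2^(1/δ)` is at most `1`, and each of the boundedly many other factors is bounded in terms
of `δ`. -/
lemma card_divisors_le_rpow (δ : ℝ) (hδ : 0 < δ) :
    ∃ C : ℝ, 0 < C ∧ ∀ n : ℕ, n ≠ 0 → (n.divisors.card : ℝ) ≤ C * (n : ℝ) ^ δ := by
  obtain ⟨N, hN⟩ := exists_nat_ge ((2 : ℝ) ^ (1 / δ))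
  have hlog : 0 < Real.log 2 := Real.log_pos one_lt_two
  set K : ℝ := 1 + 1 / (δ * Real.log 2) with hK
  have hK1 : 1 ≤ K := by
    have : 0 < 1 / (δ * Real.log 2) := by positivity
    rw [hK]; linarith
  refine ⟨K ^ N, by positivity, fun n hn => ?_⟩
  have small : ∀ p a : ℕ, 2 ≤ p → ((a : ℝ) + 1) ≤ K * ((p : ℝ) ^ a) ^ δ := by
    intro p a hp
    have hp' : (2 : ℝ) ≤ p := by exact_mod_cast hp
    have h2 : (a : ℝ) * (δ * Real.log 2) + 1 ≤ ((p : ℝ) ^ a) ^ δ := by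
      calc (a : ℝ) * (δ * Real.log 2) + 1 ≤ Real.exp ((a : ℝ) * (δ * Real.log 2)) :=
            Real.add_one_le_exp _
        _ = ((2 : ℝ) ^ a) ^ δ := by
            rw [Real.rpow_def_of_pos (by positivity), Real.log_pow]; ring_nf
        _ ≤ _ := by gcongr
    have hpos : 0 < δ * Real.log 2 := by positivity
    calc (a : ℝ) + 1 ≤ K * ((a : ℝ) * (δ * Real.log 2) + 1) := by
          have : K * ((a : ℝ) * (δ * Real.log 2) + 1)
              = a + 1 + (a : ℝ) * (δ * Real.log 2) + 1 / (δ * Real.log 2) := by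
            rw [hK]; field_simp; ring
          rw [this]
          have : 0 ≤ (a : ℝ) * (δ * Real.log 2) := by positivity
          have : 0 < 1 / (δ * Real.log 2) := by positivity
          linarith
      _ ≤ _ := by gcongr
  have large : ∀ p a : ℕ, N ≤ p → ((a : ℝ) + 1) ≤ ((p : ℝ) ^ a) ^ δ := by
    intro p a hp
    have hp' : (2 : ℝ) ^ (1 / δ) ≤ p := hN.trans (by exact_mod_cast hp)
    have h2 : (2 : ℝ) ≤ (p : ℝ) ^ δ := by
      calc (2 : ℝ) = ((2 : ℝ) ^ (1 / δ)) ^ δ := by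
            rw [← Real.rpow_mul (by norm_num), one_div_mul_cancel hδ.ne', Real.rpow_one]
        _ ≤ _ := by gcongr
    calc ((a : ℝ) + 1) ≤ 2 ^ a := by exact_mod_cast Nat.lt_two_pow_self
      _ ≤ ((p : ℝ) ^ δ) ^ a := by gcongr
      _ = _ := by rw [Real.rpow_pow_comm (by positivity)]
  have hprod : (n : ℝ) ^ δ = ∏ p ∈ n.primeFactors, ((p : ℝ) ^ n.factorization p) ^ δ := by
    rw [Real.finsetProd_rpow _ _ (fun i _ => by positivity)]
    congr 1
    conv_lhs => rw [← Nat.prod_factorization_pow_eq_self hn]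
    simp [Finsupp.prod]
  rw [Nat.card_divisors hn, hprod]
  push_cast
  calc ∏ p ∈ n.primeFactors, ((n.factorization p : ℝ) + 1)
      ≤ ∏ p ∈ n.primeFactors,
          ((if p < N then K else 1) * ((p : ℝ) ^ n.factorization p) ^ δ) := by
        apply Finset.prod_le_prod (fun i _ => by positivity)
        intro p hp
        split_ifs with hpN
        · exact small p _ (Nat.prime_of_mem_primeFactors hp).two_le
        · rw [one_mul]; exact large p _ (not_lt.mp hpN)
    _ = (∏ p ∈ n.primeFactors, if p < N then K else 1)
          * ∏ p ∈ n.primeFactors, ((p : ℝ) ^ n.factorization p) ^ δ := Finset.prod_mul_distrib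
    _ ≤ _ := by
        gcongr
        rw [← Finset.prod_filter, Finset.prod_const]
        apply pow_le_pow_right₀ hK1
        calc _ ≤ (Finset.range N).card := Finset.card_le_card (by
              intro p hp; simpa using (Finset.mem_filter.mp hp).2)
          _ = N := Finset.card_range N

/-- For every `ε > 0` there is `C_ε > 0` such that for all positive integers `P` and
`M`, the set of integer pairs `(x, y)` with `x² + P y² = M` is finite of cardinality at
most `C_ε M^ε`: the number of representations of `M` by `X² + P Y²` is `O(M^ε)`
uniformly in `P`. -/
theorem statement13 (ε : ℝ) (hε : 0 < ε) :
    ∃ C : ℝ, 0 < C ∧ ∀ P M : ℕ, 0 < P → 0 < M →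
      {p : ℤ × ℤ | p.1 ^ 2 + (P : ℤ) * p.2 ^ 2 = (M : ℤ)}.Finite ∧
        ({p : ℤ × ℤ | p.1 ^ 2 + (P : ℤ) * p.2 ^ 2 = (M : ℤ)}.ncard : ℝ) ≤
          C * (M : ℝ) ^ ε := by
  obtain ⟨C, hC, hdiv⟩ := card_divisors_le_rpow (ε / 2) (by positivity)
  refine ⟨25 * C ^ 2, by positivity, fun P M hP hM => ?_⟩
  have hfin : {p : ℤ × ℤ | p.1 ^ 2 + (P : ℤ) * p.2 ^ 2 = (M : ℤ)}.Finite := by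
    apply (Finset.finite_toSet (Finset.Icc (-(M : ℤ)) M ×ˢ Finset.Icc (-(M : ℤ)) M)).subset
    rintro ⟨x, y⟩ hxy
    simp only [Set.mem_ofPred_eq] at hxy
    have hP' : (1 : ℤ) ≤ P := by exact_mod_cast hP
    have hy : y ^ 2 ≤ M := by nlinarith [sq_nonneg x, sq_nonneg y]
    have hx : x ^ 2 ≤ M := by nlinarith [sq_nonneg y]
    simp only [Finset.coe_product, Set.mem_prod, Finset.coe_Icc, Set.mem_Icc]
    refine ⟨⟨?_, ?_⟩, ?_, ?_⟩ <;> nlinarith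
  refine ⟨hfin, ?_⟩
  rw [Set.ncard_eq_toFinset_card _ hfin]
  have h1 := card_le_of_rep M P hP hM hfin.toFinset (fun q hq => by simpa using hq)
  calc (hfin.toFinset.card : ℝ) ≤ 25 * (M.divisors.card : ℝ) ^ 2 := by exact_mod_cast h1
    _ ≤ 25 * (C * (M : ℝ) ^ (ε / 2)) ^ 2 := by
        gcongr
        exact hdiv M hM.ne'
    _ = 25 * C ^ 2 * (M : ℝ) ^ ε := by
        rw [mul_pow, ← Real.rpow_natCast ((M : ℝ) ^ (ε / 2)) 2, ← Real.rpow_mul (by positivity)]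
        norm_num
        ring
end
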